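/- arXiv:2308.01388 — 2 statements merged into one kernel-verified Lean document; each statement's English description precedes it below -/
import Mathlib

section
/- (Theorem 3.1, formula (Amri2).) Let λ ∈ C⁺ and X ∈ a. Then E_k(X,λ) = (3Γ(3k)/(V(λ)^{2k}·Γ(k)²)) ∫_{λ3}^{λ2} ∫_{λ2}^{λ1} [(ν1−λ3)(λ2−ν2)·E_k^{rk1}((x2−x3)/2, ν1−ν2) + (ν1−λ2)(ν2−λ3)·E_k^{rk1}(−(x2−x3)/2, ν1−ν2)] (λ1−ν1)(λ1−ν2) e^{(x2+x3−2x1)(ν1+ν2)/2} W_k(λ,ν) dν1 dν2. -/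
open Real MeasureTheory

/-- The rank-one Dunkl kernel `E_k^{rk1}(x,v)`. -/
noncomputable def Erk1 (k x v : ℝ) : ℝ :=
  (Real.Gamma (k + 1/2) / (Real.sqrt Real.pi * Real.Gamma k)) *
    ∫ z in (-1 : ℝ)..1, Real.exp (z * x * v) * (1 - z) ^ (k - 1) * (1 + z) ^ k

/-- The normalized modified Bessel function `𝒥_a(y)`, for `a > -1/2`. -/
noncomputable def besselJ (a y : ℝ) : ℝ :=
  (Real.Gamma (a + 1) / (Real.sqrt Real.pi * Real.Gamma (a + 1/2))) *
    ∫ z in (-1 : ℝ)..1, Real.exp (y * z) * (1 - z ^ 2) ^ (a - 1/2)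

/-- `W_k(λ,ν)`. -/
noncomputable def Wk (k l1 l2 l3 n1 n2 : ℝ) : ℝ :=
  ((l1 - n1) * (l1 - n2) * (n1 - l2) * (l2 - n2) * (n1 - l3) * (n2 - l3)) ^ (k - 1)

/-- `V(λ) = (λ1-λ2)(λ1-λ3)(λ2-λ3)`. -/
def Vlam (l1 l2 l3 : ℝ) : ℝ := (l1 - l2) * (l1 - l3) * (l2 - l3)

/-- The `A₂` Dunkl kernel `E_k(X,λ)`, defined via the rank-one kernel formula. -/
noncomputable def EkA2 (k x1 x2 x3 l1 l2 l3 : ℝ) : ℝ :=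
  (3 * Real.Gamma (3 * k) / (Vlam l1 l2 l3 ^ (2 * k) * Real.Gamma k ^ 2)) *
    ∫ n2 in l3..l2, ∫ n1 in l2..l1,
      ((n1 - l2) * (l1 - n2) * Erk1 k ((x1 - x2) / 2) (n1 - n2)
        + (l1 - n1) * (l2 - n2) * Erk1 k (-(x1 - x2) / 2) (n1 - n2))
      * ((n1 - l3) * (n2 - l3)) * Real.exp ((x1 + x2 - 2 * x3) * (n1 + n2) / 2)
      * Wk k l1 l2 l3 n1 n2


noncomputable def qq (m1 m2 m3 n1 n2 z : ℝ) : ℝ :=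
  ((n1 - m2) * (m1 - n2) * (1 + z) + (m1 - n1) * (m2 - n2) * (1 - z)) * ((n1 - m3) * (n2 - m3))
noncomputable def ph (y1 y2 y3 n1 n2 z : ℝ) : ℝ :=
  z * ((y1 - y2) / 2) * (n1 - n2) + (y1 + y2 - 2 * y3) * (n1 + n2) / 2

noncomputable def uu1 (m1 m2 m3 n2 z : ℝ) : ℝ := (n2 - m3) * ((m1 - m2) + z * (m1 + m2 - 2 * n2))
noncomputable def uu2 (m1 m2 m3 n1 z : ℝ) : ℝ := (n1 - m3) * (-(m1 - m2) + z * (m1 + m2 - 2 * n1))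
noncomputable def uu3 (m1 m2 m3 n1 n2 : ℝ) : ℝ := -(m1 - m2) ^ 2 * ((n1 - m3) * (n2 - m3))

lemma alg1 (m1 m2 m3 n1 n2 z : ℝ) :
   uu1 m1 m2 m3 n2 z * ((n1 - m2) * (n1 - m3) + (n1 - m1) * (n1 - m3) + (n1 - m1) * (n1 - m2))
   + uu2 m1 m2 m3 n1 z * ((n2 - m2) * (n2 - m3) + (n2 - m1) * (n2 - m3) + (n2 - m1) * (n2 - m2))
   - 2 * z * uu3 m1 m2 m3 n1 n2
   = 3 * qq m1 m2 m3 n1 n2 z + qq m2 m1 m3 n1 n2 z + qq m1 m3 m2 n1 n2 z + qq m3 m2 m1 n1 n2 z := by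
  unfold uu1 uu2 uu3 qq; ring

lemma alg2 (y1 y2 m1 m2 n1 n2 z : ℝ) :
   uu1 m1 m2 (-m1-m2) n2 z * ((n1 - m1) * (n1 - m2) * (n1 - (-m1-m2))) * (z * ((y1 - y2) / 2) + (y1 + y2 - 2 * (-y1-y2)) / 2)
   + uu2 m1 m2 (-m1-m2) n1 z * ((n2 - m1) * (n2 - m2) * (n2 - (-m1-m2))) * (-z * ((y1 - y2) / 2) + (y1 + y2 - 2 * (-y1-y2)) / 2)
   + uu3 m1 m2 (-m1-m2) n1 n2 * (1 - z ^ 2) * (((y1 - y2) / 2) * (n1 - n2))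
   = (ph y1 y2 (-y1-y2) n1 n2 z - (y1*m1+y2*m2+(-y1-y2)*(-m1-m2))) * qq m1 m2 (-m1-m2) n1 n2 z := by
  unfold uu1 uu2 uu3 qq ph; ring

lemma aux_int_w (a b k : ℝ) (hab : a < b) (hk : 0 < k) (g : ℝ → ℝ) (hg : Continuous g)
    (hpos : ∀ x ∈ Set.Icc a b, 0 < g x) :
    IntervalIntegrable (fun x => ((x - a) * (b - x) * g x) ^ (k - 1)) volume a b := by
  obtain ⟨c, hc⟩ : ∃ c, c = (a + b) / 2 := ⟨_, rfl⟩
  have hac : a < c := by linarith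
  have hcb : c < b := by linarith
  have h1 : IntervalIntegrable (fun x => (x - a) ^ (k - 1) * ((b - x) * g x) ^ (k - 1)) volume a c := by
    have h := (intervalIntegral.intervalIntegrable_rpow' (a := 0) (b := c - a) (r := k - 1)
      (by linarith)).comp_sub_right a
    simp only [zero_add, sub_add_cancel] at h
    refine h.mul_continuousOn (ContinuousOn.rpow_const (by fun_prop) ?_)
    intro x hx
    rw [Set.uIcc_of_le hac.le] at hx
    have := hpos x ⟨hx.1, by linarith [hx.2]⟩
    have h2 : 0 < b - x := by linarith [hx.2]
    left; positivity
  have h2 : IntervalIntegrable (fun x => (b - x) ^ (k - 1) * ((x - a) * g x) ^ (k - 1)) volume c b := by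
    have h := (intervalIntegral.intervalIntegrable_rpow' (a := b - c) (b := 0) (r := k - 1)
      (by linarith)).comp_sub_left b
    simp only [sub_sub_cancel, sub_zero] at h
    refine h.mul_continuousOn (ContinuousOn.rpow_const (by fun_prop) ?_)
    intro x hx
    rw [Set.uIcc_of_le hcb.le] at hx
    have := hpos x ⟨by linarith [hx.1], hx.2⟩
    have h2 : 0 < x - a := by linarith [hx.1]
    left; positivity
  refine IntervalIntegrable.trans (b := c) (h1.congr ?_) (h2.congr ?_)
  · intro x hx
    rw [Set.uIoc_of_le hac.le] at hx
    have := hpos x ⟨hx.1.le, by linarith [hx.2]⟩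
    have h2 : 0 < b - x := by linarith [hx.2]
    have h3 : 0 < x - a := by linarith [hx.1]
    simp only
    rw [← Real.mul_rpow (by positivity) (by positivity)]
    ring_nf
  · intro x hx
    rw [Set.uIoc_of_le hcb.le] at hx
    have := hpos x ⟨by linarith [hx.1], hx.2⟩
    have h2 : 0 ≤ b - x := by linarith [hx.2]
    have h3 : 0 < x - a := by linarith [hx.1]
    simp only
    rw [← Real.mul_rpow (by positivity) (by positivity)]
    ring_nf

structure GoodW (a b k : ℝ) (p p' : ℝ → ℝ) : Prop where
  hab : a < b
  hk : 0 < k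
  pa : p a = 0
  pb : p b = 0
  pos : ∀ x ∈ Set.Ioo a b, 0 < p x
  der : ∀ x, HasDerivAt p (p' x) x
  cont' : Continuous p'
  int : IntervalIntegrable (fun x => p x ^ (k - 1)) volume a b

noncomputable def muW (a b k : ℝ) (p : ℝ → ℝ) : Measure ℝ :=
  (volume.restrict (Set.Ioc a b)).withDensity (fun x => ENNReal.ofReal (p x ^ (k - 1)))

section
variable {a b k : ℝ} {p p' : ℝ → ℝ}

lemma GoodW.cont (H : GoodW a b k p p') : Continuous p :=
  continuous_iff_continuousAt.2 fun x => (H.der x).continuousAt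

lemma GoodW.nonneg (H : GoodW a b k p p') {x : ℝ} (hx : x ∈ Set.Icc a b) : 0 ≤ p x := by
  rcases eq_or_lt_of_le hx.1 with h | h
  · rw [← h, H.pa]
  rcases eq_or_lt_of_le hx.2 with h' | h'
  · rw [h', H.pb]
  exact (H.pos x ⟨h, h'⟩).le

lemma GoodW.fin (H : GoodW a b k p p') : IsFiniteMeasure (muW a b k p) := by
  unfold muW
  exact isFiniteMeasure_withDensity_ofReal
    ((intervalIntegrable_iff_integrableOn_Ioc_of_le H.hab.le).1 H.int).2

lemma muW_supp : ∀ᵐ x ∂(muW a b k p), x ∈ Set.Icc a b := by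
  unfold muW
  apply (withDensity_absolutelyContinuous _ _).ae_le
  filter_upwards [ae_restrict_mem measurableSet_Ioc] with x hx
  exact ⟨hx.1.le, hx.2⟩

lemma GoodW.integral (H : GoodW a b k p p') (f : ℝ → ℝ) :
    ∫ x, f x ∂(muW a b k p) = ∫ x in a..b, f x * p x ^ (k - 1) := by
  unfold muW
  have hm : Measurable (fun x => ENNReal.ofReal (p x ^ (k - 1))) :=
    (H.cont.measurable.pow_const _).ennreal_ofReal
  rw [integral_withDensity_eq_integral_toReal_smul hm (by simp), intervalIntegral.integral_of_le H.hab.le]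
  apply setIntegral_congr_fun measurableSet_Ioc
  intro x hx
  have := H.nonneg (x := x) ⟨hx.1.le, hx.2⟩
  simp only [smul_eq_mul]
  rw [ENNReal.toReal_ofReal (by positivity)]
  ring

lemma GoodW.ibp (H : GoodW a b k p p') (h h' : ℝ → ℝ) (hd : ∀ x, HasDerivAt h (h' x) x)
    (hc : Continuous h') : ∫ x, (k * p' x * h x + p x * h' x) ∂(muW a b k p) = 0 := by
  rw [H.integral]
  have hcp := H.cont
  have hch : Continuous h := continuous_iff_continuousAt.2 fun x => (hd x).continuousAt
  have hc' := H.cont'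
  rw [intervalIntegral.integral_eq_sub_of_hasDerivAt_of_le H.hab.le
    (f := fun x => p x ^ k * h x)]
  · simp [H.pa, H.pb, Real.zero_rpow H.hk.ne']
  · exact ((hcp.rpow_const (fun _ => Or.inr H.hk.le)).mul hch).continuousOn
  · intro x hx
    have hp := H.pos x hx
    have := ((H.der x).rpow_const (p := k) (Or.inl hp.ne')).mul (hd x)
    refine HasDerivAt.congr_deriv (f := fun x => p x ^ k * h x) this ?_
    have e : p x ^ k = p x ^ (k - 1) * p x := by
      rw [← Real.rpow_add_one hp.ne']; ring_nf
    rw [e]; ring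
  · exact H.int.continuousOn_mul (by fun_prop)
end

lemma cont_int {X : Type*} [TopologicalSpace X] [MeasurableSpace X] [OpensMeasurableSpace X]
    {μ : Measure X} [IsFiniteMeasure μ] {K : Set X} (hK : IsCompact K)
    (hs : ∀ᵐ x ∂μ, x ∈ K) {f : X → ℝ} (hf : Continuous f) : Integrable f μ := by
  obtain ⟨C, hC⟩ := hK.exists_bound_of_continuousOn hf.continuousOn
  refine Integrable.of_bound hf.aestronglyMeasurable C ?_
  filter_upwards [hs] with x hx using hC x hx

lemma ae_prod_supp {X Y : Type*} [MeasurableSpace X] [MeasurableSpace Y] {μ : Measure X}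
    {ν : Measure Y} [SFinite μ] [SFinite ν] {K : Set X} {L : Set Y} (h1 : ∀ᵐ x ∂μ, x ∈ K)
    (h2 : ∀ᵐ x ∂ν, x ∈ L) : ∀ᵐ x ∂(μ.prod ν), x ∈ K ×ˢ L := by
  filter_upwards [Measure.quasiMeasurePreserving_fst.ae h1,
    Measure.quasiMeasurePreserving_snd.ae h2] with x hx hy using ⟨hx, hy⟩

lemma series_int {X : Type*} [TopologicalSpace X] [MeasurableSpace X] [OpensMeasurableSpace X]
    {μ : Measure X} [IsFiniteMeasure μ] {K : Set X} (hK : IsCompact K)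
    (hs : ∀ᵐ x ∂μ, x ∈ K) {q f : X → ℝ} (hq : Continuous q) (hf : Continuous f) :
    ∫ x, q x * Real.exp (f x) ∂μ = ∑' n : ℕ, (∫ x, q x * f x ^ n ∂μ) / (n.factorial : ℝ) := by
  obtain ⟨C, hC⟩ := hK.exists_bound_of_continuousOn hf.continuousOn
  obtain ⟨D, hD⟩ := hK.exists_bound_of_continuousOn hq.continuousOn
  have hi : ∀ n : ℕ, Integrable (fun x => q x * f x ^ n / (n.factorial : ℝ)) μ := fun n =>
    cont_int hK hs (by fun_prop)
  have key := hasSum_integral_of_summable_integral_norm (μ := μ)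
    (F := fun (n : ℕ) x => q x * f x ^ n / (n.factorial : ℝ)) hi ?_
  · have e : ∀ x, ∑' n : ℕ, q x * f x ^ n / (n.factorial : ℝ) = q x * Real.exp (f x) := by
      intro x
      rw [Real.exp_eq_exp_ℝ, NormedSpace.exp_eq_tsum_div, ← tsum_mul_left]
      simp only [mul_div_assoc]
    simp only [e, integral_div] at key
    exact key.tsum_eq.symm
  · have hsum : Summable (fun n : ℕ => μ.real Set.univ * (|D| * (|C| ^ n / (n.factorial : ℝ)))) :=
      ((Real.summable_pow_div_factorial |C|).mul_left _).mul_left _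
    refine Summable.of_nonneg_of_le (fun n => integral_nonneg fun x => norm_nonneg _) (fun n => ?_) hsum
    have : ∫ x, |D| * (|C| ^ n / (n.factorial : ℝ)) ∂μ
        = μ.real Set.univ * (|D| * (|C| ^ n / (n.factorial : ℝ))) := by
      rw [integral_const, smul_eq_mul]
    rw [← this]
    refine integral_mono_ae (hi n).norm (integrable_const _) ?_
    filter_upwards [hs] with x hx
    have h1 := (hC x hx).trans (le_abs_self C)
    have h2 := (hD x hx).trans (le_abs_self D)
    simp only [norm_div, norm_mul, norm_pow]
    rw [mul_div_assoc]
    have : ‖(n.factorial : ℝ)‖ = (n.factorial : ℝ) := by simp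
    rw [this]
    gcongr

section
variable {a b c d e f k : ℝ} {p p' r r' s s' : ℝ → ℝ}

lemma ibp_z (A : GoodW a b k p p') (B : GoodW c d k r r') (C : GoodW e f k s s')
    (u : ℝ → ℝ → ℝ) (h h' : ℝ → ℝ → ℝ → ℝ) (hu : Continuous fun t : ℝ × ℝ × ℝ => u t.1 t.2.1)
    (hd : ∀ x y z, HasDerivAt (h x y) (h' x y z) z)
    (hc : Continuous fun t : ℝ × ℝ × ℝ => h t.1 t.2.1 t.2.2)
    (hc' : Continuous fun t : ℝ × ℝ × ℝ => h' t.1 t.2.1 t.2.2) :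
    ∫ t : ℝ × ℝ × ℝ, u t.1 t.2.1 * (k * s' t.2.2 * h t.1 t.2.1 t.2.2 + s t.2.2 * h' t.1 t.2.1 t.2.2)
      ∂((muW a b k p).prod ((muW c d k r).prod (muW e f k s))) = 0 := by
  have := A.fin
  have := B.fin
  have := C.fin
  have hp := C.cont
  have hp' := C.cont'
  have hF : Continuous fun t : ℝ × ℝ × ℝ =>
    u t.1 t.2.1 * (k * s' t.2.2 * h t.1 t.2.1 t.2.2 + s t.2.2 * h' t.1 t.2.1 t.2.2) :=
    hu.mul (((continuous_const.mul (hp'.comp (continuous_snd.comp continuous_snd))).mul hc).add ((hp.comp (continuous_snd.comp continuous_snd)).mul hc'))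
  rw [integral_prod _ (cont_int (isCompact_Icc.prod (isCompact_Icc.prod isCompact_Icc))
    (ae_prod_supp muW_supp (ae_prod_supp muW_supp muW_supp)) hF)]
  simp only
  apply integral_eq_zero_of_ae
  refine Filter.Eventually.of_forall fun x => ?_
  simp only [Pi.zero_apply]
  refine (integral_prod _ (cont_int (isCompact_Icc.prod isCompact_Icc)
    (ae_prod_supp muW_supp muW_supp) (hF.comp (Continuous.prodMk_right x)))).trans ?_
  apply integral_eq_zero_of_ae
  refine Filter.Eventually.of_forall fun y => ?_
  simp only [Pi.zero_apply, Function.comp_apply]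
  rw [integral_const_mul, C.ibp (h x y) (h' x y) (hd x y) (by fun_prop), mul_zero]

lemma ibp_y (A : GoodW a b k p p') (B : GoodW c d k r r') (C : GoodW e f k s s')
    (u : ℝ → ℝ → ℝ) (h h' : ℝ → ℝ → ℝ → ℝ) (hu : Continuous fun t : ℝ × ℝ × ℝ => u t.1 t.2.2)
    (hd : ∀ x y z, HasDerivAt (fun y => h x y z) (h' x y z) y)
    (hc : Continuous fun t : ℝ × ℝ × ℝ => h t.1 t.2.1 t.2.2)
    (hc' : Continuous fun t : ℝ × ℝ × ℝ => h' t.1 t.2.1 t.2.2) :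
    ∫ t : ℝ × ℝ × ℝ, u t.1 t.2.2 * (k * r' t.2.1 * h t.1 t.2.1 t.2.2 + r t.2.1 * h' t.1 t.2.1 t.2.2)
      ∂((muW a b k p).prod ((muW c d k r).prod (muW e f k s))) = 0 := by
  have := A.fin
  have := B.fin
  have := C.fin
  have hp := B.cont
  have hp' := B.cont'
  have hF : Continuous fun t : ℝ × ℝ × ℝ =>
    u t.1 t.2.2 * (k * r' t.2.1 * h t.1 t.2.1 t.2.2 + r t.2.1 * h' t.1 t.2.1 t.2.2) :=
    hu.mul (((continuous_const.mul (hp'.comp (continuous_fst.comp continuous_snd))).mul hc).add ((hp.comp (continuous_fst.comp continuous_snd)).mul hc'))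
  rw [integral_prod _ (cont_int (isCompact_Icc.prod (isCompact_Icc.prod isCompact_Icc))
    (ae_prod_supp muW_supp (ae_prod_supp muW_supp muW_supp)) hF)]
  apply integral_eq_zero_of_ae
  refine Filter.Eventually.of_forall fun x => ?_
  simp only [Pi.zero_apply]
  refine (integral_prod_symm _ (cont_int (isCompact_Icc.prod isCompact_Icc)
    (ae_prod_supp muW_supp muW_supp) (hF.comp (Continuous.prodMk_right x)))).trans ?_
  apply integral_eq_zero_of_ae
  refine Filter.Eventually.of_forall fun z => ?_
  simp only [Pi.zero_apply, Function.comp_apply]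
  rw [integral_const_mul, B.ibp (fun y => h x y z) (fun y => h' x y z) (fun y => hd x y z)
    (hc'.comp (f := fun y : ℝ => ((x, y, z) : ℝ × ℝ × ℝ)) (by fun_prop)), mul_zero]

lemma ibp_x (A : GoodW a b k p p') (B : GoodW c d k r r') (C : GoodW e f k s s')
    (u : ℝ → ℝ → ℝ) (h h' : ℝ → ℝ → ℝ → ℝ) (hu : Continuous fun t : ℝ × ℝ × ℝ => u t.2.1 t.2.2)
    (hd : ∀ x y z, HasDerivAt (fun x => h x y z) (h' x y z) x)
    (hc : Continuous fun t : ℝ × ℝ × ℝ => h t.1 t.2.1 t.2.2)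
    (hc' : Continuous fun t : ℝ × ℝ × ℝ => h' t.1 t.2.1 t.2.2) :
    ∫ t : ℝ × ℝ × ℝ, u t.2.1 t.2.2 * (k * p' t.1 * h t.1 t.2.1 t.2.2 + p t.1 * h' t.1 t.2.1 t.2.2)
      ∂((muW a b k p).prod ((muW c d k r).prod (muW e f k s))) = 0 := by
  have := A.fin
  have := B.fin
  have := C.fin
  have hp := A.cont
  have hp' := A.cont'
  have hF : Continuous fun t : ℝ × ℝ × ℝ =>
    u t.2.1 t.2.2 * (k * p' t.1 * h t.1 t.2.1 t.2.2 + p t.1 * h' t.1 t.2.1 t.2.2) :=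
    hu.mul (((continuous_const.mul (hp'.comp (continuous_fst))).mul hc).add ((hp.comp (continuous_fst)).mul hc'))
  rw [integral_prod_symm _ (cont_int (isCompact_Icc.prod (isCompact_Icc.prod isCompact_Icc))
    (ae_prod_supp muW_supp (ae_prod_supp muW_supp muW_supp)) hF)]
  apply integral_eq_zero_of_ae
  refine Filter.Eventually.of_forall fun z => ?_
  simp only [Pi.zero_apply]
  rw [integral_const_mul, A.ibp (fun x => h x z.1 z.2) (fun x => h' x z.1 z.2)
    (fun x => hd x z.1 z.2)
    (hc'.comp (f := fun x : ℝ => ((x, z.1, z.2) : ℝ × ℝ × ℝ)) (by fun_prop)), mul_zero]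
end

noncomputable def gp (a b c0 c1 x : ℝ) : ℝ := (x - a) * (b - x) * (c0 + c1 * x)
noncomputable def gp' (a b c0 c1 x : ℝ) : ℝ :=
  (b - x) * (c0 + c1 * x) - (x - a) * (c0 + c1 * x) + (x - a) * (b - x) * c1

lemma goodW_gp (a b k c0 c1 : ℝ) (hab : a < b) (hk : 0 < k)
    (hpos : ∀ x ∈ Set.Icc a b, 0 < c0 + c1 * x) : GoodW a b k (gp a b c0 c1) (gp' a b c0 c1) where
  hab := hab
  hk := hk
  pa := by simp [gp]
  pb := by simp [gp]
  pos := by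
    intro x hx
    have h1 := hpos x ⟨hx.1.le, hx.2.le⟩
    have h2 : 0 < x - a := by linarith [hx.1]
    have h3 : 0 < b - x := by linarith [hx.2]
    unfold gp; positivity
  der := by
    intro x
    have h1 : HasDerivAt (fun x : ℝ => x - a) 1 x := (hasDerivAt_id x).sub_const a
    have h2 : HasDerivAt (fun x : ℝ => b - x) (-1) x := (hasDerivAt_id x).const_sub b
    have h3 : HasDerivAt (fun x : ℝ => c0 + c1 * x) (c1 * 1) x :=
      ((hasDerivAt_id x).const_mul c1).const_add c0
    exact HasDerivAt.congr_deriv (f := gp a b c0 c1) ((h1.mul h2).mul h3) (by unfold gp'; simp; ring)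
  cont' := by unfold gp'; fun_prop
  int := aux_int_w a b k hab hk (fun x => c0 + c1 * x) (by fun_prop) hpos

noncomputable def MM (k l1 l2 l3 : ℝ) : Measure (ℝ × ℝ × ℝ) :=
  (muW l3 l2 k (gp l3 l2 l1 (-1))).prod ((muW l2 l1 k (gp l2 l1 (-l3) 1)).prod
    (muW (-1) 1 k (gp (-1) 1 1 0)))

noncomputable def II (k l1 l2 l3 : ℝ) (n : ℕ) (y1 y2 y3 m1 m2 m3 : ℝ) : ℝ :=
  ∫ t : ℝ × ℝ × ℝ, qq m1 m2 m3 t.2.1 t.1 t.2.2 * ph y1 y2 y3 t.2.1 t.1 t.2.2 ^ n ∂(MM k l1 l2 l3)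

lemma gA {k l1 l2 l3 : ℝ} (hk : 0 < k) (h12 : l2 < l1) (h23 : l3 < l2) :
    GoodW l3 l2 k (gp l3 l2 l1 (-1)) (gp' l3 l2 l1 (-1)) :=
  goodW_gp _ _ _ _ _ h23 hk (fun x hx => by linarith [hx.2])
lemma gB {k l1 l2 l3 : ℝ} (hk : 0 < k) (h12 : l2 < l1) (h23 : l3 < l2) :
    GoodW l2 l1 k (gp l2 l1 (-l3) 1) (gp' l2 l1 (-l3) 1) :=
  goodW_gp _ _ _ _ _ h12 hk (fun x hx => by linarith [hx.1])
lemma gC {k : ℝ} (hk : 0 < k) :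
    GoodW (-1) 1 k (gp (-1) 1 1 0) (gp' (-1) 1 1 0) :=
  goodW_gp _ _ _ _ _ (by norm_num) hk (fun x hx => by norm_num)

lemma MM_fin {k l1 l2 l3 : ℝ} (hk : 0 < k) (h12 : l2 < l1) (h23 : l3 < l2) :
    IsFiniteMeasure (MM k l1 l2 l3) := by
  have := (gA hk h12 h23).fin
  have := (gB hk h12 h23).fin
  have := (gC hk).fin
  unfold MM; infer_instance

lemma MM_supp {k l1 l2 l3 : ℝ} (hk : 0 < k) (h12 : l2 < l1) (h23 : l3 < l2) :
    ∀ᵐ t ∂(MM k l1 l2 l3), t ∈ Set.Icc l3 l2 ×ˢ (Set.Icc l2 l1 ×ˢ Set.Icc (-1 : ℝ) 1) := by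
  have := (gA hk h12 h23).fin
  have := (gB hk h12 h23).fin
  have := (gC hk).fin
  exact ae_prod_supp muW_supp (ae_prod_supp muW_supp muW_supp)

lemma box_compact (l1 l2 l3 : ℝ) :
    IsCompact (Set.Icc l3 l2 ×ˢ (Set.Icc l2 l1 ×ˢ Set.Icc (-1 : ℝ) 1)) :=
  isCompact_Icc.prod (isCompact_Icc.prod isCompact_Icc)

lemma MM_int {k l1 l2 l3 : ℝ} (hk : 0 < k) (h12 : l2 < l1) (h23 : l3 < l2)
    {f : ℝ × ℝ × ℝ → ℝ} (hf : Continuous f) : Integrable f (MM k l1 l2 l3) := by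
  have := MM_fin hk h12 h23
  exact cont_int (box_compact l1 l2 l3) (MM_supp hk h12 h23) hf

lemma recur {k l1 l2 l3 : ℝ} (hk : 0 < k) (h12 : l2 < l1) (h23 : l3 < l2) (n : ℕ)
    (y1 y2 y3 m1 m2 m3 : ℝ) (hy : y1 + y2 + y3 = 0) (hm : m1 + m2 + m3 = 0)
    (hP : ∀ v : ℝ, (v - l1) * (v - l2) * (v - l3) = (v - m1) * (v - m2) * (v - m3))
    (hP' : ∀ v : ℝ, (v - l2) * (v - l3) + (v - l1) * (v - l3) + (v - l1) * (v - l2)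
      = (v - m2) * (v - m3) + (v - m1) * (v - m3) + (v - m1) * (v - m2)) :
    (n + 3 * k) * II k l1 l2 l3 n y1 y2 y3 m1 m2 m3
      + k * (II k l1 l2 l3 n y1 y2 y3 m2 m1 m3 + II k l1 l2 l3 n y1 y2 y3 m1 m3 m2
        + II k l1 l2 l3 n y1 y2 y3 m3 m2 m1)
      = n * (y1 * m1 + y2 * m2 + y3 * m3) * II k l1 l2 l3 (n - 1) y1 y2 y3 m1 m2 m3 := by
  have cph : Continuous fun t : ℝ × ℝ × ℝ => ph y1 y2 y3 t.2.1 t.1 t.2.2 := by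
    unfold ph; fun_prop
  have cqq : ∀ m1 m2 m3, Continuous fun t : ℝ × ℝ × ℝ => qq m1 m2 m3 t.2.1 t.1 t.2.2 := by
    intro m1 m2 m3; unfold qq; fun_prop
  have T1 := ibp_y (gA hk h12 h23) (gB hk h12 h23) (gC hk) (fun n2 z => -uu1 m1 m2 m3 n2 z)
    (fun n2 n1 z => ph y1 y2 y3 n1 n2 z ^ n)
    (fun n2 n1 z => n * ph y1 y2 y3 n1 n2 z ^ (n - 1) * (z * ((y1 - y2) / 2) + (y1 + y2 - 2 * y3) / 2))
    (by unfold uu1; fun_prop)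
    (by
      intro n2 n1 z
      have h : HasDerivAt (fun n1 => ph y1 y2 y3 n1 n2 z)
          (z * ((y1 - y2) / 2) + (y1 + y2 - 2 * y3) / 2) n1 := by
        unfold ph
        have h1 := (((hasDerivAt_id n1).sub_const n2).const_mul (z * ((y1 - y2) / 2))).add
          ((((hasDerivAt_id n1).add_const n2).const_mul (y1 + y2 - 2 * y3)).div_const 2)
        exact HasDerivAt.congr_deriv h1 (by ring)
      exact h.pow n)
    (cph.pow n) (by fun_prop)
  have T2 := ibp_x (gA hk h12 h23) (gB hk h12 h23) (gC hk) (fun n1 z => uu2 m1 m2 m3 n1 z)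
    (fun n2 n1 z => ph y1 y2 y3 n1 n2 z ^ n)
    (fun n2 n1 z => n * ph y1 y2 y3 n1 n2 z ^ (n - 1) * (-z * ((y1 - y2) / 2) + (y1 + y2 - 2 * y3) / 2))
    (by unfold uu2; fun_prop)
    (by
      intro n2 n1 z
      have h : HasDerivAt (fun n2 => ph y1 y2 y3 n1 n2 z)
          (-z * ((y1 - y2) / 2) + (y1 + y2 - 2 * y3) / 2) n2 := by
        unfold ph
        have h1 := (((hasDerivAt_id n2).const_sub n1).const_mul (z * ((y1 - y2) / 2))).add
          ((((hasDerivAt_id n2).const_add n1).const_mul (y1 + y2 - 2 * y3)).div_const 2)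
        exact HasDerivAt.congr_deriv h1 (by ring)
      exact h.pow n)
    (cph.pow n) (by fun_prop)
  have T3 := ibp_z (gA hk h12 h23) (gB hk h12 h23) (gC hk) (fun n2 n1 => uu3 m1 m2 m3 n1 n2)
    (fun n2 n1 z => ph y1 y2 y3 n1 n2 z ^ n)
    (fun n2 n1 z => n * ph y1 y2 y3 n1 n2 z ^ (n - 1) * (((y1 - y2) / 2) * (n1 - n2)))
    (by unfold uu3; fun_prop)
    (by
      intro n2 n1 z
      have h : HasDerivAt (fun z => ph y1 y2 y3 n1 n2 z)
          (((y1 - y2) / 2) * (n1 - n2)) z := by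
        unfold ph
        have h1 := (((hasDerivAt_id z).mul_const ((y1 - y2) / 2)).mul_const (n1 - n2)).add_const
          ((y1 + y2 - 2 * y3) * (n1 + n2) / 2)
        exact HasDerivAt.congr_deriv h1 (by ring)
      exact h.pow n)
    (cph.pow n) (by fun_prop)
  change ∫ t : ℝ × ℝ × ℝ, _ ∂(MM k l1 l2 l3) = 0 at T1 T2 T3
  have i1 : Integrable (fun t : ℝ × ℝ × ℝ => qq m1 m2 m3 t.2.1 t.1 t.2.2 * ph y1 y2 y3 t.2.1 t.1 t.2.2 ^ n)
    (MM k l1 l2 l3) := MM_int hk h12 h23 ((cqq _ _ _).mul (cph.pow _))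
  have i2 : Integrable (fun t : ℝ × ℝ × ℝ => qq m2 m1 m3 t.2.1 t.1 t.2.2 * ph y1 y2 y3 t.2.1 t.1 t.2.2 ^ n)
    (MM k l1 l2 l3) := MM_int hk h12 h23 ((cqq _ _ _).mul (cph.pow _))
  have i3 : Integrable (fun t : ℝ × ℝ × ℝ => qq m1 m3 m2 t.2.1 t.1 t.2.2 * ph y1 y2 y3 t.2.1 t.1 t.2.2 ^ n)
    (MM k l1 l2 l3) := MM_int hk h12 h23 ((cqq _ _ _).mul (cph.pow _))
  have i4 : Integrable (fun t : ℝ × ℝ × ℝ => qq m3 m2 m1 t.2.1 t.1 t.2.2 * ph y1 y2 y3 t.2.1 t.1 t.2.2 ^ n)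
    (MM k l1 l2 l3) := MM_int hk h12 h23 ((cqq _ _ _).mul (cph.pow _))
  have i5 : Integrable (fun t : ℝ × ℝ × ℝ => qq m1 m2 m3 t.2.1 t.1 t.2.2
    * ph y1 y2 y3 t.2.1 t.1 t.2.2 ^ (n - 1))
    (MM k l1 l2 l3) := MM_int hk h12 h23 ((cqq _ _ _).mul (cph.pow _))
  have S : ∫ t : ℝ × ℝ × ℝ, ((n + 3 * k) * (qq m1 m2 m3 t.2.1 t.1 t.2.2 * ph y1 y2 y3 t.2.1 t.1 t.2.2 ^ n)
      + k * (qq m2 m1 m3 t.2.1 t.1 t.2.2 * ph y1 y2 y3 t.2.1 t.1 t.2.2 ^ n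
        + qq m1 m3 m2 t.2.1 t.1 t.2.2 * ph y1 y2 y3 t.2.1 t.1 t.2.2 ^ n
        + qq m3 m2 m1 t.2.1 t.1 t.2.2 * ph y1 y2 y3 t.2.1 t.1 t.2.2 ^ n)
      - n * (y1 * m1 + y2 * m2 + y3 * m3) * (qq m1 m2 m3 t.2.1 t.1 t.2.2
        * ph y1 y2 y3 t.2.1 t.1 t.2.2 ^ (n - 1))) ∂(MM k l1 l2 l3) = 0 := by
    have hgp : Continuous (gp l3 l2 l1 (-1)) := (gA hk h12 h23).cont
    have hgp2 : Continuous (gp l2 l1 (-l3) 1) := (gB hk h12 h23).cont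
    have hgp3 : Continuous (gp (-1) 1 1 0) := (gC hk).cont
    have hgp' : Continuous (gp' l3 l2 l1 (-1)) := (gA hk h12 h23).cont'
    have hgp2' : Continuous (gp' l2 l1 (-l3) 1) := (gB hk h12 h23).cont'
    have hgp3' : Continuous (gp' (-1) 1 1 0) := (gC hk).cont'
    have E := congrArg₂ (· + ·) (congrArg₂ (· + ·) T1 T2) T3
    rw [add_zero, add_zero, ← integral_add (by apply MM_int hk h12 h23; unfold uu1; fun_prop)
      (by apply MM_int hk h12 h23; unfold uu2; fun_prop),
      ← integral_add (by apply MM_int hk h12 h23; unfold uu1 uu2; fun_prop)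
      (by apply MM_int hk h12 h23; unfold uu3; fun_prop)] at E
    rw [← E]
    congr 1
    funext t
    obtain ⟨n2, n1, z⟩ := t
    simp only
    have g1 : gp l2 l1 (-l3) 1 n1 = -((n1 - m1) * (n1 - m2) * (n1 - m3)) := by
      rw [← hP]; unfold gp; ring
    have g2 : gp l3 l2 l1 (-1) n2 = ((n2 - m1) * (n2 - m2) * (n2 - m3)) := by
      rw [← hP]; unfold gp; ring
    have g1' : gp' l2 l1 (-l3) 1 n1
        = -((n1 - m2) * (n1 - m3) + (n1 - m1) * (n1 - m3) + (n1 - m1) * (n1 - m2)) := by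
      rw [← hP']; unfold gp'; ring
    have g2' : gp' l3 l2 l1 (-1) n2
        = ((n2 - m2) * (n2 - m3) + (n2 - m1) * (n2 - m3) + (n2 - m1) * (n2 - m2)) := by
      rw [← hP']; unfold gp'; ring
    have g3 : gp (-1) 1 1 0 z = 1 - z ^ 2 := by unfold gp; ring
    have g3' : gp' (-1) 1 1 0 z = -2 * z := by unfold gp'; ring
    rw [g1, g2, g1', g2', g3, g3']
    have a1 := alg1 m1 m2 m3 n1 n2 z
    have a2 := alg2 y1 y2 m1 m2 n1 n2 z
    rw [show -m1 - m2 = m3 by linarith, show -y1 - y2 = y3 by linarith] at a2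
    have hn : (n : ℝ) * ph y1 y2 y3 n1 n2 z ^ (n - 1) * ph y1 y2 y3 n1 n2 z
        = n * ph y1 y2 y3 n1 n2 z ^ n := by
      cases n with
      | zero => simp
      | succ n => rw [Nat.add_sub_cancel, pow_succ]; ring
    linear_combination (-k * ph y1 y2 y3 n1 n2 z ^ n) * a1
      - (n * ph y1 y2 y3 n1 n2 z ^ (n - 1)) * a2 - qq m1 m2 m3 n1 n2 z * hn
  rw [integral_sub (by exact (i1.const_mul _).add (((i2.add i3).add i4).const_mul _)) (i5.const_mul _),
    integral_add (i1.const_mul _) (by exact ((i2.add i3).add i4).const_mul _), integral_const_mul, integral_const_mul,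
    integral_const_mul, integral_add (by exact i2.add i3) i4, integral_add i2 i3] at S
  unfold II
  linarith

lemma moments_eq {k l1 l2 l3 : ℝ} (hk : 0 < k) (h12 : l2 < l1) (h23 : l3 < l2)
    (hl : l1 + l2 + l3 = 0) (x1 x2 x3 : ℝ) (hx : x1 + x2 + x3 = 0) (n : ℕ) :
    (II k l1 l2 l3 n x1 x2 x3 l1 l2 l3 = II k l1 l2 l3 n x2 x3 x1 l2 l3 l1 ∧
    II k l1 l2 l3 n x1 x2 x3 l2 l3 l1 = II k l1 l2 l3 n x2 x3 x1 l3 l1 l2 ∧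
    II k l1 l2 l3 n x1 x2 x3 l3 l1 l2 = II k l1 l2 l3 n x2 x3 x1 l1 l2 l3) ∧
    (II k l1 l2 l3 n x1 x2 x3 l2 l1 l3 = II k l1 l2 l3 n x2 x3 x1 l1 l3 l2 ∧
    II k l1 l2 l3 n x1 x2 x3 l1 l3 l2 = II k l1 l2 l3 n x2 x3 x1 l3 l2 l1 ∧
    II k l1 l2 l3 n x1 x2 x3 l3 l2 l1 = II k l1 l2 l3 n x2 x3 x1 l2 l1 l3) := by
  have hc : x2 + x3 + x1 = 0 := by linarith
  have R := fun (n : ℕ) (y1 y2 y3 : ℝ) (hy : y1 + y2 + y3 = 0) =>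
    (⟨recur hk h12 h23 n y1 y2 y3 l1 l2 l3 hy (by linarith) (fun v => by ring) (fun v => by ring),
    recur hk h12 h23 n y1 y2 y3 l2 l3 l1 hy (by linarith) (fun v => by ring) (fun v => by ring),
    recur hk h12 h23 n y1 y2 y3 l3 l1 l2 hy (by linarith) (fun v => by ring) (fun v => by ring),
    recur hk h12 h23 n y1 y2 y3 l2 l1 l3 hy (by linarith) (fun v => by ring) (fun v => by ring),
    recur hk h12 h23 n y1 y2 y3 l1 l3 l2 hy (by linarith) (fun v => by ring) (fun v => by ring),
    recur hk h12 h23 n y1 y2 y3 l3 l2 l1 hy (by linarith) (fun v => by ring) (fun v => by ring)⟩ :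
      _ ∧ _ ∧ _ ∧ _ ∧ _ ∧ _)
  induction n with
  | zero =>
    have z : ∀ m1 m2 m3, II k l1 l2 l3 0 x2 x3 x1 m1 m2 m3 = II k l1 l2 l3 0 x1 x2 x3 m1 m2 m3 := by
      intro m1 m2 m3; simp [II]
    simp only [z]
    obtain ⟨r1, r2, r3, r4, r5, r6⟩ := R 0 x1 x2 x3 hx
    have h3k : (3 * k) ≠ 0 := by positivity
    simp only [Nat.cast_zero, zero_mul, zero_add] at r1 r2 r3 r4 r5 r6
    refine ⟨⟨?_, ?_, ?_⟩, ?_, ?_, ?_⟩ <;> apply mul_left_cancel₀ h3k <;> linarith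
  | succ n ih =>
    obtain ⟨⟨e1, e2, e3⟩, e4, e5, e6⟩ := ih
    obtain ⟨r1, r2, r3, r4, r5, r6⟩ := R (n + 1) x1 x2 x3 hx
    obtain ⟨s1, s2, s3, s4, s5, s6⟩ := R (n + 1) x2 x3 x1 hc
    simp only [Nat.add_sub_cancel] at r1 r2 r3 r4 r5 r6 s1 s2 s3 s4 s5 s6
    obtain ⟨N, hN⟩ : ∃ N : ℝ, N = ((n + 1 : ℕ) : ℝ) := ⟨_, rfl⟩
    have hNpos : 0 < N := by rw [hN]; positivity
    rw [← hN] at r1 r2 r3 r4 r5 r6 s1 s2 s3 s4 s5 s6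
    rw [e1] at r1
    rw [e2] at r2
    rw [e3] at r3
    rw [e4] at r4
    rw [e5] at r5
    rw [e6] at r6
    generalize II k l1 l2 l3 n x2 x3 x1 l1 l2 l3 = c1 at *
    generalize II k l1 l2 l3 n x2 x3 x1 l2 l3 l1 = c2 at *
    generalize II k l1 l2 l3 n x2 x3 x1 l3 l1 l2 = c3 at *
    generalize II k l1 l2 l3 n x2 x3 x1 l2 l1 l3 = c4 at *
    generalize II k l1 l2 l3 n x2 x3 x1 l1 l3 l2 = c5 at *
    generalize II k l1 l2 l3 n x2 x3 x1 l3 l2 l1 = c6 at *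
    generalize II k l1 l2 l3 (n + 1) x2 x3 x1 l1 l2 l3 = b1 at *
    generalize II k l1 l2 l3 (n + 1) x2 x3 x1 l2 l3 l1 = b2 at *
    generalize II k l1 l2 l3 (n + 1) x2 x3 x1 l3 l1 l2 = b3 at *
    generalize II k l1 l2 l3 (n + 1) x2 x3 x1 l2 l1 l3 = b4 at *
    generalize II k l1 l2 l3 (n + 1) x2 x3 x1 l1 l3 l2 = b5 at *
    generalize II k l1 l2 l3 (n + 1) x2 x3 x1 l3 l2 l1 = b6 at *
    generalize II k l1 l2 l3 (n + 1) x1 x2 x3 l1 l2 l3 = a1 at *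
    generalize II k l1 l2 l3 (n + 1) x1 x2 x3 l2 l3 l1 = a2 at *
    generalize II k l1 l2 l3 (n + 1) x1 x2 x3 l3 l1 l2 = a3 at *
    generalize II k l1 l2 l3 (n + 1) x1 x2 x3 l2 l1 l3 = a4 at *
    generalize II k l1 l2 l3 (n + 1) x1 x2 x3 l1 l3 l2 = a5 at *
    generalize II k l1 l2 l3 (n + 1) x1 x2 x3 l3 l2 l1 = a6 at *
    have hne : N + 3 * k ≠ 0 := by positivity
    have hdet : N * (N + 6 * k) ≠ 0 := by positivity
    have Q1 : (N + 3 * k) * ((a1 + a2 + a3) - (b1 + b2 + b3))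
        + 3 * k * ((a4 + a5 + a6) - (b4 + b5 + b6)) = 0 := by
      linear_combination r1 + r2 + r3 - s1 - s2 - s3
    have Q2 : (N + 3 * k) * ((a4 + a5 + a6) - (b4 + b5 + b6))
        + 3 * k * ((a1 + a2 + a3) - (b1 + b2 + b3)) = 0 := by
      linear_combination r4 + r5 + r6 - s4 - s5 - s6
    have Z1 : (a1 + a2 + a3) - (b1 + b2 + b3) = 0 := by
      apply mul_left_cancel₀ hdet
      linear_combination (N + 3 * k) * Q1 - 3 * k * Q2
    have Z2 : (a4 + a5 + a6) - (b4 + b5 + b6) = 0 := by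
      apply mul_left_cancel₀ hdet
      linear_combination (N + 3 * k) * Q2 - 3 * k * Q1
    refine ⟨⟨?_, ?_, ?_⟩, ?_, ?_, ?_⟩ <;> apply mul_left_cancel₀ hne
    · linear_combination r1 - s2 - k * Z2
    · linear_combination r2 - s3 - k * Z2
    · linear_combination r3 - s1 - k * Z2
    · linear_combination r4 - s5 - k * Z1
    · linear_combination r5 - s6 - k * Z1
    · linear_combination r6 - s4 - k * Z1

lemma exp_eq {k l1 l2 l3 : ℝ} (hk : 0 < k) (h12 : l2 < l1) (h23 : l3 < l2)
    (hl : l1 + l2 + l3 = 0) (x1 x2 x3 : ℝ) (hx : x1 + x2 + x3 = 0) :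
    ∫ t : ℝ × ℝ × ℝ, qq l1 l2 l3 t.2.1 t.1 t.2.2 * Real.exp (ph x1 x2 x3 t.2.1 t.1 t.2.2)
      ∂(MM k l1 l2 l3)
    = ∫ t : ℝ × ℝ × ℝ, qq l2 l3 l1 t.2.1 t.1 t.2.2 * Real.exp (ph x2 x3 x1 t.2.1 t.1 t.2.2)
      ∂(MM k l1 l2 l3) := by
  have := MM_fin hk h12 h23
  rw [series_int (box_compact l1 l2 l3) (MM_supp hk h12 h23) (by unfold qq; fun_prop)
      (by unfold ph; fun_prop),
    series_int (box_compact l1 l2 l3) (MM_supp hk h12 h23) (by unfold qq; fun_prop)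
      (by unfold ph; fun_prop)]
  congr 1
  funext n
  congr 1
  exact (moments_eq hk h12 h23 hl x1 x2 x3 hx n).1.1

lemma rpow_split {x k : ℝ} (hx : 0 ≤ x) (hk : 0 < k) : x ^ k = x * x ^ (k - 1) := by
  rcases eq_or_lt_of_le hx with h | h
  · rw [← h, Real.zero_rpow hk.ne', zero_mul]
  · rw [Real.rpow_sub_one h.ne']; field_simp

lemma erk_comb {k : ℝ} (hk : 0 < k) (A B x v : ℝ) :
    A * Erk1 k x v + B * Erk1 k (-x) v
    = (Real.Gamma (k + 1/2) / (Real.sqrt Real.pi * Real.Gamma k)) *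
      ∫ z in (-1 : ℝ)..1, (A * (1 + z) + B * (1 - z)) * Real.exp (z * x * v)
        * gp (-1) 1 1 0 z ^ (k - 1) := by
  have H := gC hk
  have h1 : ∫ z in (-1 : ℝ)..1, Real.exp (z * x * v) * (1 - z) ^ (k - 1) * (1 + z) ^ k
      = ∫ z in (-1 : ℝ)..1, ((1 + z) * Real.exp (z * x * v)) * gp (-1) 1 1 0 z ^ (k - 1) := by
    apply intervalIntegral.integral_congr
    intro z hz
    rw [Set.uIcc_of_le (by norm_num)] at hz
    have e1 : 0 ≤ 1 - z := by linarith [hz.2]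
    have e2 : 0 ≤ 1 + z := by linarith [hz.1]
    simp only
    rw [show gp (-1) 1 1 0 z = (1 - z) * (1 + z) by unfold gp; ring, Real.mul_rpow e1 e2,
      rpow_split e2 hk]
    ring
  have h2 : ∫ z in (-1 : ℝ)..1, Real.exp (z * (-x) * v) * (1 - z) ^ (k - 1) * (1 + z) ^ k
      = ∫ z in (-1 : ℝ)..1, ((1 - z) * Real.exp (z * x * v)) * gp (-1) 1 1 0 z ^ (k - 1) := by
    have := intervalIntegral.integral_comp_neg (a := -1) (b := 1)
      (fun z : ℝ => Real.exp (z * (-x) * v) * (1 - z) ^ (k - 1) * (1 + z) ^ k)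
    rw [neg_neg] at this
    rw [← this]
    apply intervalIntegral.integral_congr
    intro z hz
    rw [Set.uIcc_of_le (by norm_num)] at hz
    have e1 : 0 ≤ 1 - z := by linarith [hz.2]
    have e2 : 0 ≤ 1 + z := by linarith [hz.1]
    simp only
    rw [show gp (-1) 1 1 0 z = (1 - z) * (1 + z) by unfold gp; ring, Real.mul_rpow e1 e2,
      show 1 + -z = 1 - z by ring, rpow_split e1 hk, show 1 - -z = 1 + z by ring,
      show -z * -x * v = z * x * v by ring]
    ring
  unfold Erk1
  rw [h1, h2]
  have i1 : IntervalIntegrable (fun z : ℝ => ((1 + z) * Real.exp (z * x * v))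
      * gp (-1) 1 1 0 z ^ (k - 1)) volume (-1) 1 := H.int.continuousOn_mul (by fun_prop)
  have i2 : IntervalIntegrable (fun z : ℝ => ((1 - z) * Real.exp (z * x * v))
      * gp (-1) 1 1 0 z ^ (k - 1)) volume (-1) 1 := H.int.continuousOn_mul (by fun_prop)
  have e : ∫ z in (-1 : ℝ)..1, (A * (1 + z) + B * (1 - z)) * Real.exp (z * x * v)
        * gp (-1) 1 1 0 z ^ (k - 1)
      = A * (∫ z in (-1 : ℝ)..1, ((1 + z) * Real.exp (z * x * v)) * gp (-1) 1 1 0 z ^ (k - 1))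
      + B * (∫ z in (-1 : ℝ)..1, ((1 - z) * Real.exp (z * x * v)) * gp (-1) 1 1 0 z ^ (k - 1)) := by
    rw [← intervalIntegral.integral_const_mul, ← intervalIntegral.integral_const_mul,
      ← intervalIntegral.integral_add (i1.const_mul A) (i2.const_mul B)]
    congr 1
    funext z
    ring
  rw [e]; ring

lemma conv {k l1 l2 l3 : ℝ} (hk : 0 < k) (h12 : l2 < l1) (h23 : l3 < l2)
    (y1 y2 y3 m1 m2 m3 : ℝ) :
    ∫ n2 in l3..l2, ∫ n1 in l2..l1,
      ((n1 - m2) * (m1 - n2) * Erk1 k ((y1 - y2) / 2) (n1 - n2)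
        + (m1 - n1) * (m2 - n2) * Erk1 k (-(y1 - y2) / 2) (n1 - n2))
      * ((n1 - m3) * (n2 - m3)) * Real.exp ((y1 + y2 - 2 * y3) * (n1 + n2) / 2)
      * Wk k l1 l2 l3 n1 n2
    = (Real.Gamma (k + 1/2) / (Real.sqrt Real.pi * Real.Gamma k)) *
      ∫ t : ℝ × ℝ × ℝ, qq m1 m2 m3 t.2.1 t.1 t.2.2 * Real.exp (ph y1 y2 y3 t.2.1 t.1 t.2.2)
      ∂(MM k l1 l2 l3) := by
  have := (gA hk h12 h23).fin
  have := (gB hk h12 h23).fin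
  have := (gC hk).fin
  have hF : Continuous fun t : ℝ × ℝ × ℝ =>
      qq m1 m2 m3 t.2.1 t.1 t.2.2 * Real.exp (ph y1 y2 y3 t.2.1 t.1 t.2.2) := by
    unfold qq ph; fun_prop
  have E : ∫ t : ℝ × ℝ × ℝ, qq m1 m2 m3 t.2.1 t.1 t.2.2 * Real.exp (ph y1 y2 y3 t.2.1 t.1 t.2.2)
      ∂(MM k l1 l2 l3) = ∫ n2 in l3..l2, (∫ n1 in l2..l1, (∫ z in (-1 : ℝ)..1,
        qq m1 m2 m3 n1 n2 z * Real.exp (ph y1 y2 y3 n1 n2 z) * gp (-1) 1 1 0 z ^ (k - 1))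
          * gp l2 l1 (-l3) 1 n1 ^ (k - 1)) * gp l3 l2 l1 (-1) n2 ^ (k - 1) := by
    have hI := MM_int hk h12 h23 hF
    unfold MM at hI ⊢
    refine (integral_prod _ hI).trans ?_
    rw [(gA hk h12 h23).integral]
    congr 1
    funext n2
    congr 1
    have hI2 := cont_int (isCompact_Icc.prod isCompact_Icc)
      (ae_prod_supp (μ := muW l2 l1 k (gp l2 l1 (-l3) 1)) (ν := muW (-1) 1 k (gp (-1) 1 1 0))
        muW_supp muW_supp) (hF.comp (Continuous.prodMk_right n2))
    refine (integral_prod _ hI2).trans ?_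
    rw [(gB hk h12 h23).integral]
    congr 1
    funext n1
    congr 1
    rw [(gC hk).integral]
    rfl
  rw [E, ← intervalIntegral.integral_const_mul]
  apply intervalIntegral.integral_congr
  intro n2 hn2
  rw [Set.uIcc_of_le h23.le] at hn2
  simp only
  rw [mul_comm (∫ n1 in l2..l1, _) _, ← mul_assoc, ← intervalIntegral.integral_const_mul]
  apply intervalIntegral.integral_congr
  intro n1 hn1
  rw [Set.uIcc_of_le h12.le] at hn1
  simp only
  rw [neg_div, erk_comb hk]
  have w : Wk k l1 l2 l3 n1 n2
      = gp l2 l1 (-l3) 1 n1 ^ (k - 1) * gp l3 l2 l1 (-1) n2 ^ (k - 1) := by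
    rw [← Real.mul_rpow ((gB hk h12 h23).nonneg hn1) ((gA hk h12 h23).nonneg hn2)]
    unfold Wk gp
    ring_nf
  have z : ∫ z in (-1 : ℝ)..1,
        qq m1 m2 m3 n1 n2 z * Real.exp (ph y1 y2 y3 n1 n2 z) * gp (-1) 1 1 0 z ^ (k - 1)
      = ((n1 - m3) * (n2 - m3) * Real.exp ((y1 + y2 - 2 * y3) * (n1 + n2) / 2)) *
      ∫ z in (-1 : ℝ)..1, ((n1 - m2) * (m1 - n2) * (1 + z) + (m1 - n1) * (m2 - n2) * (1 - z))
        * Real.exp (z * ((y1 - y2) / 2) * (n1 - n2)) * gp (-1) 1 1 0 z ^ (k - 1) := by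
    rw [← intervalIntegral.integral_const_mul]
    congr 1
    funext z
    unfold qq ph
    rw [Real.exp_add]
    ring
  rw [w, z]
  ring

/-- Theorem 3.1, formula (Amri2). -/
theorem EkA2_eq_beta_formula (k : ℝ) (hk : 0 < k) (l1 l2 l3 x1 x2 x3 : ℝ)
    (hl : l1 + l2 + l3 = 0) (hl12 : l2 < l1) (hl23 : l3 < l2)
    (hx : x1 + x2 + x3 = 0) :
    EkA2 k x1 x2 x3 l1 l2 l3
    = (3 * Real.Gamma (3 * k) / (Vlam l1 l2 l3 ^ (2 * k) * Real.Gamma k ^ 2)) *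
      ∫ n2 in l3..l2, ∫ n1 in l2..l1,
        ((n1 - l3) * (l2 - n2) * Erk1 k ((x2 - x3) / 2) (n1 - n2)
          + (n1 - l2) * (n2 - l3) * Erk1 k (-(x2 - x3) / 2) (n1 - n2))
        * ((l1 - n1) * (l1 - n2)) * Real.exp ((x2 + x3 - 2 * x1) * (n1 + n2) / 2)
        * Wk k l1 l2 l3 n1 n2 := by
  have e := exp_eq hk hl12 hl23 hl x1 x2 x3 hx
  unfold EkA2
  congr 1
  rw [conv hk hl12 hl23 x1 x2 x3 l1 l2 l3, e, ← conv hk hl12 hl23 x2 x3 x1 l2 l3 l1]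
  congr 1
  funext n2
  congr 1
  funext n1
  ring
end

section
/- (Theorem 4.1(i).) Uniformly over all λ ∈ C⁺ and all X ∈ a with x1 ≥ x2 ≥ x3, one has E_k(X,λ) ≍ e^{⟨λ,X⟩} / [ (1+α_λ α_X)^k (1+β_λ β_X)^k (1+γ_λ γ_X)^k ]. -/
open Real MeasureTheory

lemma half_rpow (e x : ℝ) (h1 : 1/2 ≤ x) (h2 : x ≤ 1) :
    (2:ℝ) ^ (-|e|) ≤ x ^ e ∧ x ^ e ≤ (2:ℝ) ^ |e| := by
  have hx : 0 < x := by linarith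
  rw [Real.rpow_def_of_pos hx, Real.rpow_def_of_pos two_pos, Real.rpow_def_of_pos two_pos]
  have l1 : Real.log x ≤ 0 := Real.log_nonpos hx.le h2
  have l2 : -Real.log 2 ≤ Real.log x := by
    rw [← Real.log_inv]; apply Real.log_le_log (by norm_num); linarith
  have ha : |Real.log x * e| ≤ Real.log 2 * |e| := by
    rw [abs_mul]; gcongr; rw [abs_le]; constructor <;> linarith
  have := abs_le.1 ha
  constructor <;> apply Real.exp_le_exp.2 <;> linarith

lemma two_add_rpow (κ θ : ℝ) (hκ : 0 < κ) (hθ : 0 < θ) :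
    ∃ M : ℝ, 0 < M ∧ ∀ s : ℝ, 0 ≤ s → (2 + s) ^ κ ≤ M * Real.exp (θ * s) := by
  refine ⟨(2 + κ/θ) ^ κ, by positivity, fun s hs => ?_⟩
  have h1 : 2 + s ≤ (2 + κ/θ) * Real.exp (θ * s / κ) := by
    have := Real.add_one_le_exp (θ * s / κ)
    have h3 : (2 + κ/θ) * (θ * s / κ + 1) = 2 + s + 2 * (θ * s/κ) + κ/θ := by
      field_simp; ring
    have h4 : 0 ≤ 2 * (θ * s/κ) + κ/θ := by positivity
    calc 2 + s ≤ (2 + κ/θ) * (θ * s / κ + 1) := by linarith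
      _ ≤ _ := by gcongr
  calc (2 + s) ^ κ ≤ ((2 + κ/θ) * Real.exp (θ * s / κ)) ^ κ := by gcongr
    _ = _ := by
      rw [Real.mul_rpow (by positivity) (by positivity), ← Real.exp_mul]
      congr 2; field_simp

/-- basic integrand -/
noncomputable def gk (κ m θ s u : ℝ) : ℝ :=
  Real.exp (-(θ * s * u)) * u ^ (κ - 1) * (1 - u) ^ (m - 1)

lemma gk_nonneg (κ m θ s u : ℝ) (h : u ∈ Set.Ioo (0:ℝ) 1) : 0 ≤ gk κ m θ s u := by
  have h1 := h.1
  have h2 : 0 < 1 - u := by linarith [h.2]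
  unfold gk; positivity

lemma gk_upper_pt (κ m θ : ℝ) (hκ : 0 < κ) (hm : 0 < m) (hθ : 0 < θ) :
    ∃ M : ℝ, 0 < M ∧ ∀ s u : ℝ, 0 ≤ s → u ∈ Set.Ioo (0:ℝ) 1 → gk κ m θ s u ≤
      M * (u ^ (κ - 1) * Real.exp (-(θ * (1 + s) * u))) + M * ((1 + s) ^ (-κ) * (1 - u) ^ (m - 1)) := by
  obtain ⟨N, hN, hN'⟩ := two_add_rpow κ (θ/2) hκ (by positivity)
  refine ⟨2 ^ |m - 1| * Real.exp θ + 2 ^ |κ - 1| * N, by positivity, fun s u hs hu => ?_⟩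
  obtain ⟨h0, h1⟩ := hu
  have h1' : 0 < 1 - u := by linarith
  have A : 0 ≤ u ^ (κ - 1) * Real.exp (-(θ * (1 + s) * u)) := by positivity
  have B : 0 ≤ (1 + s) ^ (-κ) * (1 - u) ^ (m - 1) := by positivity
  rcases le_total u (1/2) with h | h
  · have e1 : gk κ m θ s u ≤ (2 ^ |m - 1| * Real.exp θ) * (u ^ (κ - 1) * Real.exp (-(θ * (1 + s) * u))) := by
      have a1 := (half_rpow (m-1) (1-u) (by linarith) (by linarith)).2
      have a2 : Real.exp (-(θ * s * u)) ≤ Real.exp θ * Real.exp (-(θ * (1 + s) * u)) := by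
        rw [← Real.exp_add]; apply Real.exp_le_exp.2; nlinarith
      unfold gk
      calc _ ≤ (Real.exp θ * Real.exp (-(θ * (1 + s) * u))) * u ^ (κ - 1) * 2 ^ |m-1| := by gcongr
        _ = _ := by ring
    have : 0 ≤ (2 ^ |κ - 1| * N) * (u ^ (κ - 1) * Real.exp (-(θ * (1 + s) * u))) := by positivity
    have : 0 ≤ (2 ^ |m - 1| * Real.exp θ + 2 ^ |κ - 1| * N) * ((1 + s) ^ (-κ) * (1 - u) ^ (m - 1)) := by positivity
    linarith
  · have e1 : gk κ m θ s u ≤ (2 ^ |κ - 1| * N) * ((1 + s) ^ (-κ) * (1 - u) ^ (m - 1)) := by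
      have a1 := (half_rpow (κ-1) u (by linarith) (by linarith)).2
      have a2 : Real.exp (-(θ * s * u)) ≤ N * (1 + s) ^ (-κ) := by
        have : (1 + s) ^ κ ≤ N * Real.exp (θ/2 * s) :=
          le_trans (by gcongr; linarith) (hN' s hs)
        rw [Real.rpow_neg (by positivity), Real.exp_neg, ← div_eq_mul_inv, inv_eq_one_div,
          div_le_div_iff₀ (by positivity) (by positivity), one_mul]
        refine this.trans ?_
        have : 0 ≤ θ * s := by positivity
        have h5 : θ / 2 * s ≤ θ * s * u := by nlinarith
        gcongr
      unfold gk
      calc _ ≤ (N * (1 + s) ^ (-κ)) * 2 ^ |κ-1| * (1 - u) ^ (m - 1) := by gcongr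
        _ = _ := by ring
    have : 0 ≤ (2 ^ |m - 1| * Real.exp θ) * ((1 + s) ^ (-κ) * (1 - u) ^ (m - 1)) := by positivity
    have : 0 ≤ (2 ^ |m - 1| * Real.exp θ + 2 ^ |κ - 1| * N) * (u ^ (κ - 1) * Real.exp (-(θ * (1 + s) * u))) := by positivity
    linarith

lemma gk_meas (κ m θ s : ℝ) : Measurable (gk κ m θ s) := by
  unfold gk; fun_prop

lemma int1 (κ c : ℝ) (hκ : 0 < κ) (hc : 0 < c) :
    IntegrableOn (fun u : ℝ => u ^ (κ - 1) * Real.exp (-(c * u))) (Set.Ioi 0) := by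
  by_contra h
  have h2 := Real.integral_rpow_mul_exp_neg_mul_Ioi hκ hc
  rw [MeasureTheory.integral_undef h] at h2
  have : 0 < (1 / c) ^ κ * Real.Gamma κ := by
    have := Real.Gamma_pos_of_pos hκ
    positivity
  linarith

lemma int2 (m : ℝ) (hm : 0 < m) :
    IntegrableOn (fun u : ℝ => (1 - u) ^ (m - 1)) (Set.Ioo 0 1) ∧
    ∫ u in Set.Ioo (0:ℝ) 1, (1 - u) ^ (m - 1) = 1 / m := by
  have h := intervalIntegral.intervalIntegrable_rpow' (a := 0) (b := 1) (r := m - 1) (by linarith)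
  have h2 := (h.comp_sub_left 1).symm
  simp only [sub_zero, sub_self] at h2
  constructor
  · rw [intervalIntegrable_iff_integrableOn_Ioo_of_le zero_le_one] at h2
    exact h2
  · rw [← integral_Ioc_eq_integral_Ioo, ← intervalIntegral.integral_of_le zero_le_one,
      intervalIntegral.integral_comp_sub_left (fun x => x ^ (m - 1)) 1,
      integral_rpow (Or.inl (by linarith))]
    simp [Real.zero_rpow hm.ne']

lemma gk_bounds (κ m θ : ℝ) (hκ : 0 < κ) (hm : 0 < m) (hθ : 0 < θ) :
    ∃ M : ℝ, 0 < M ∧ ∀ s : ℝ, 0 ≤ s →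
      IntegrableOn (gk κ m θ s) (Set.Ioo 0 1) ∧
      M⁻¹ * (1 + s) ^ (-κ) ≤ ∫ u in Set.Ioo (0:ℝ) 1, gk κ m θ s u ∧
      ∫ u in Set.Ioo (0:ℝ) 1, gk κ m θ s u ≤ M * (1 + s) ^ (-κ) := by
  obtain ⟨N, hN, hN'⟩ := gk_upper_pt κ m θ hκ hm hθ
  set K : ℝ := Real.exp (-θ) * 2 ^ (-|m - 1|) * ((1/2) ^ κ / κ) with hK
  have hKp : 0 < K := by positivity
  have hG := Real.Gamma_pos_of_pos hκ
  refine ⟨N * (θ ^ (-κ) * Real.Gamma κ) + N * (1/m) + K⁻¹, by positivity, fun s hs => ?_⟩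
  have i1 : IntegrableOn (fun u : ℝ => u ^ (κ - 1) * Real.exp (-(θ * (1 + s) * u))) (Set.Ioi 0) :=
    int1 κ _ hκ (by positivity)
  have i1' := i1.mono_set (Set.Ioo_subset_Ioi_self : Set.Ioo (0:ℝ) 1 ⊆ _)
  obtain ⟨i2, i2'⟩ := int2 m hm
  have idom : IntegrableOn (fun u : ℝ => N * (u ^ (κ - 1) * Real.exp (-(θ * (1 + s) * u))) + N * ((1 + s) ^ (-κ) * (1 - u) ^ (m - 1))) (Set.Ioo 0 1) :=
    (i1'.const_mul N).add ((i2.const_mul _).const_mul N)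
  have hint : IntegrableOn (gk κ m θ s) (Set.Ioo 0 1) := by
    refine Integrable.mono' idom (gk_meas κ m θ s).aestronglyMeasurable ?_
    refine (ae_restrict_iff' measurableSet_Ioo).2 (ae_of_all _ fun u hu => ?_)
    rw [Real.norm_of_nonneg (gk_nonneg _ _ _ _ _ hu)]
    exact hN' s u hs hu
  have hpos : 0 < (1 + s) ^ (-κ) := by positivity
  refine ⟨hint, ?_, ?_⟩
  · have hδ : (0:ℝ) ≤ 1 / (2 * (1 + s)) := by positivity
    have hδ2 : 1 / (2 * (1 + s)) ≤ 1/2 := by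
      apply one_div_le_one_div_of_le (by norm_num); linarith
    have st1 : K * (1 + s) ^ (-κ) ≤ ∫ u in Set.Ioo (0:ℝ) (1 / (2 * (1 + s))), gk κ m θ s u := by
      have hp := intervalIntegral.intervalIntegrable_rpow' (a := 0) (b := 1 / (2 * (1 + s))) (r := κ - 1) (by linarith)
      have e : ∫ u in Set.Ioo (0:ℝ) (1 / (2 * (1 + s))), (Real.exp (-θ) * 2 ^ (-|m - 1|)) * u ^ (κ - 1)
          = K * (1 + s) ^ (-κ) := by
        rw [integral_const_mul, ← integral_Ioc_eq_integral_Ioo, ← intervalIntegral.integral_of_le hδ,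
          integral_rpow (Or.inl (by linarith)), hK]
        have : (1 / (2 * (1 + s))) ^ κ = (1/2) ^ κ * (1 + s) ^ (-κ) := by
          rw [Real.rpow_neg (by positivity), ← Real.inv_rpow (by positivity),
            ← Real.mul_rpow (by positivity) (by positivity)]
          congr 1; field_simp
        simp only [sub_add_cancel, this, Real.zero_rpow hκ.ne', sub_zero]
        ring
      rw [← e]
      apply setIntegral_mono_on
      · apply Integrable.const_mul
        exact (intervalIntegrable_iff_integrableOn_Ioo_of_le hδ).1 hp
      · exact hint.mono_set (Set.Ioo_subset_Ioo le_rfl (by linarith))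
      · exact measurableSet_Ioo
      · intro u hu
        obtain ⟨h0, h1⟩ := hu
        have a1 := (half_rpow (m-1) (1-u) (by linarith) (by linarith)).1
        have a2 : Real.exp (-θ) ≤ Real.exp (-(θ * s * u)) := by
          apply Real.exp_le_exp.2
          have : s * u ≤ 1 := by
            rw [lt_div_iff₀ (by positivity)] at h1
            nlinarith
          nlinarith
        unfold gk
        calc _ ≤ Real.exp (-(θ * s * u)) * (1 - u) ^ (m - 1) * u ^ (κ - 1) := by gcongr
          _ = _ := by ring
    have st2 : ∫ u in Set.Ioo (0:ℝ) (1 / (2 * (1 + s))), gk κ m θ s u ≤ ∫ u in Set.Ioo (0:ℝ) 1, gk κ m θ s u := by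
      apply setIntegral_mono_set hint
      · exact (ae_restrict_iff' measurableSet_Ioo).2 (ae_of_all _ fun u hu => gk_nonneg _ _ _ _ _ hu)
      · exact (Set.Ioo_subset_Ioo le_rfl (by linarith)).eventuallyLE
    refine le_trans ?_ (st1.trans st2)
    gcongr
    rw [inv_le_comm₀ (by positivity) hKp]
    have : 0 ≤ N * (θ ^ (-κ) * Real.Gamma κ) + N * (1/m) := by positivity
    linarith
  · calc ∫ u in Set.Ioo (0:ℝ) 1, gk κ m θ s u ≤ ∫ u in Set.Ioo (0:ℝ) 1, (N * (u ^ (κ - 1) * Real.exp (-(θ * (1 + s) * u))) + N * ((1 + s) ^ (-κ) * (1 - u) ^ (m - 1))) := 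
          setIntegral_mono_on hint idom measurableSet_Ioo (fun u hu => hN' s u hs hu)
      _ = N * (∫ u in Set.Ioo (0:ℝ) 1, u ^ (κ - 1) * Real.exp (-(θ * (1 + s) * u))) + N * ((1 + s) ^ (-κ) * (1 / m)) := by
          rw [integral_add (i1'.const_mul N) ((i2.const_mul _).const_mul N), integral_const_mul,
            integral_const_mul, integral_const_mul, i2']
      _ ≤ N * (∫ u in Set.Ioi (0:ℝ), u ^ (κ - 1) * Real.exp (-(θ * (1 + s) * u))) + N * ((1 + s) ^ (-κ) * (1 / m)) := by
          gcongr ?_ + _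
          refine mul_le_mul_of_nonneg_left ?_ hN.le
          apply setIntegral_mono_set i1
          · refine (ae_restrict_iff' measurableSet_Ioi).2 (ae_of_all _ fun u hu => ?_)
            have : 0 < u := hu
            simp only [Pi.zero_apply]; positivity
          · exact Set.Ioo_subset_Ioi_self.eventuallyLE
      _ = (N * (θ ^ (-κ) * Real.Gamma κ) + N * (1/m)) * (1 + s) ^ (-κ) := by
          rw [Real.integral_rpow_mul_exp_neg_mul_Ioi hκ (by positivity), one_div,
            Real.inv_rpow (by positivity), ← Real.rpow_neg (by positivity),
            Real.mul_rpow (by positivity) (by positivity)]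
          ring
      _ ≤ _ := by
          refine mul_le_mul_of_nonneg_right ?_ hpos.le
          have : 0 < K⁻¹ := by positivity
          linarith

lemma two_rpow_prod (k : ℝ) : (2:ℝ) * (2 ^ (k - 1) * 2 ^ k) = 2 ^ (2 * k) := by
  nth_rewrite 1 [← Real.rpow_one 2]
  rw [← Real.rpow_add two_pos, ← Real.rpow_add two_pos]; congr 1; ring

lemma Erk1_pos_eq (k y : ℝ) : ∫ z in (-1 : ℝ)..1, Real.exp (z * y) * (1 - z) ^ (k - 1) * (1 + z) ^ k
    = 2 ^ (2 * k) * Real.exp y * ∫ u in Set.Ioo (0:ℝ) 1, gk k (k+1) 1 (2 * y) u := by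
  have h := intervalIntegral.mul_integral_comp_sub_mul (a := 0) (b := 1)
    (f := fun z : ℝ => Real.exp (z * y) * (1 - z) ^ (k - 1) * (1 + z) ^ k) 2 1
  norm_num at h
  rw [← h, intervalIntegral.integral_of_le zero_le_one, integral_Ioc_eq_integral_Ioo,
    ← integral_const_mul, ← integral_const_mul]
  apply setIntegral_congr_fun measurableSet_Ioo
  intro u hu
  obtain ⟨h0, h1⟩ := hu
  have h1' : 0 < 1 - u := by linarith
  unfold gk
  have e1 : 1 + (1 - 2 * u) = 2 * (1 - u) := by ring
  simp only [e1]
  rw [Real.mul_rpow (by norm_num) h1'.le, Real.mul_rpow (by norm_num) h0.le, ← two_rpow_prod,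
    show (1 - 2 * u) * y = y + -(1 * (2 * y) * u) by ring, Real.exp_add, add_sub_cancel_right]
  ring

lemma Erk1_neg_eq (k y : ℝ) : ∫ z in (-1 : ℝ)..1, Real.exp (z * (-y)) * (1 - z) ^ (k - 1) * (1 + z) ^ k
    = 2 ^ (2 * k) * Real.exp y * ∫ u in Set.Ioo (0:ℝ) 1, gk (k+1) k 1 (2 * y) u := by
  have h := intervalIntegral.mul_integral_comp_mul_add (a := 0) (b := 1)
    (f := fun z : ℝ => Real.exp (z * (-y)) * (1 - z) ^ (k - 1) * (1 + z) ^ k) 2 (-1)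
  norm_num at h
  norm_num
  rw [← h, intervalIntegral.integral_of_le zero_le_one, integral_Ioc_eq_integral_Ioo,
    ← integral_const_mul, ← integral_const_mul]
  apply setIntegral_congr_fun measurableSet_Ioo
  intro u hu
  obtain ⟨h0, h1⟩ := hu
  have h1' : 0 < 1 - u := by linarith
  unfold gk
  have e1 : 1 - (2 * u + -1) = 2 * (1 - u) := by ring
  have e2 : 1 + (2 * u + -1) = 2 * u := by ring
  simp only [e1, e2]
  rw [Real.mul_rpow (by norm_num) h1'.le, Real.mul_rpow (by norm_num) h0.le, ← two_rpow_prod,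
    show -((2 * u + -1) * y) = y + -(1 * (2 * y) * u) by ring, Real.exp_add, add_sub_cancel_right]
  ring

lemma Erk1_bounds (k : ℝ) (hk : 0 < k) : ∃ C : ℝ, 0 < C ∧ ∀ x v : ℝ, 0 ≤ x → 0 ≤ v →
    C⁻¹ * (Real.exp (x * v) * (1 + 2 * (x * v)) ^ (-k)) ≤ Erk1 k x v ∧
    Erk1 k x v ≤ C * (Real.exp (x * v) * (1 + 2 * (x * v)) ^ (-k)) ∧
    0 ≤ Erk1 k (-x) v ∧ Erk1 k (-x) v ≤ C * (Real.exp (x * v) * (1 + 2 * (x * v)) ^ (-k)) := by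
  obtain ⟨M, hM, hM'⟩ := gk_bounds k (k+1) 1 hk (by linarith) one_pos
  obtain ⟨N, hN, hN'⟩ := gk_bounds (k+1) k 1 (by linarith) hk one_pos
  set G : ℝ := Real.Gamma (k + 1/2) / (Real.sqrt Real.pi * Real.Gamma k) with hGdef
  have hG : 0 < G := by
    have := Real.Gamma_pos_of_pos hk
    have := Real.Gamma_pos_of_pos (show 0 < k + 1/2 by linarith)
    positivity
  set P : ℝ := G * 2 ^ (2 * k) with hP
  have hPp : 0 < P := by positivity
  refine ⟨P * M + P * N + (P * M⁻¹)⁻¹, by positivity, fun x v hx hv => ?_⟩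
  have hy : 0 ≤ 2 * (x * v) := by positivity
  obtain ⟨-, m1, m2⟩ := hM' _ hy
  obtain ⟨-, n1, n2⟩ := hN' _ hy
  have e1 : Erk1 k x v = P * Real.exp (x * v) * ∫ u in Set.Ioo (0:ℝ) 1, gk k (k+1) 1 (2 * (x * v)) u := by
    unfold Erk1
    simp only [mul_assoc _ x v]
    rw [Erk1_pos_eq, ← hGdef, hP]; ring
  have e2 : Erk1 k (-x) v = P * Real.exp (x * v) * ∫ u in Set.Ioo (0:ℝ) 1, gk (k+1) k 1 (2 * (x * v)) u := by
    unfold Erk1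
    simp only [mul_assoc _ (-x) v, neg_mul x v]
    rw [Erk1_neg_eq, ← hGdef, hP]; ring
  have hE := Real.exp_pos (x * v)
  have hR : 0 < (1 + 2 * (x * v)) ^ (-k) := by positivity
  have hR' : 0 < (1 + 2 * (x * v)) ^ (-(k+1)) := by positivity
  have hRR : (1 + 2 * (x * v)) ^ (-(k+1)) ≤ (1 + 2 * (x * v)) ^ (-k) :=
    Real.rpow_le_rpow_of_exponent_le (by linarith) (by linarith)
  rw [e1, e2]
  refine ⟨?_, ?_, ?_, ?_⟩
  · calc _ ≤ (P * M⁻¹) * (Real.exp (x * v) * (1 + 2 * (x * v)) ^ (-k)) := by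
          gcongr
          rw [inv_le_comm₀ (by positivity) (by positivity)]
          have : 0 ≤ P * M + P * N := by positivity
          linarith
      _ = P * Real.exp (x * v) * (M⁻¹ * (1 + 2 * (x * v)) ^ (-k)) := by ring
      _ ≤ _ := by gcongr
  · calc _ ≤ P * Real.exp (x * v) * (M * (1 + 2 * (x * v)) ^ (-k)) := by gcongr
      _ = (P * M) * (Real.exp (x * v) * (1 + 2 * (x * v)) ^ (-k)) := by ring
      _ ≤ _ := by
        gcongr
        have : 0 ≤ P * N + (P * M⁻¹)⁻¹ := by positivity
        linarith
  · have : 0 ≤ N⁻¹ * (1 + 2 * (x * v)) ^ (-(k+1)) := by positivity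
    have := this.trans n1
    positivity
  · calc _ ≤ P * Real.exp (x * v) * (N * (1 + 2 * (x * v)) ^ (-k)) := by
          gcongr
          exact n2.trans (by gcongr)
      _ = (P * N) * (Real.exp (x * v) * (1 + 2 * (x * v)) ^ (-k)) := by ring
      _ ≤ _ := by
        gcongr
        have : 0 ≤ P * M + (P * M⁻¹)⁻¹ := by positivity
        linarith

lemma Erk1_meas (k x : ℝ) : Measurable (Erk1 k x) := by
  unfold Erk1
  apply Measurable.const_mul
  simp only [intervalIntegral.integral_of_le (show (-1:ℝ) ≤ 1 by norm_num)]
  apply StronglyMeasurable.measurable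
  apply StronglyMeasurable.integral_prod_right
    (f := fun v z : ℝ => Real.exp (z * x * v) * (1 - z) ^ (k - 1) * (1 + z) ^ k)
  apply Measurable.stronglyMeasurable
  unfold Function.uncurry
  fun_prop

lemma prod_bounds (F : ℝ → ℝ → ℝ) (hF : Measurable (Function.uncurry F)) (G1 G2 H1 H2 : ℝ → ℝ)
    (hG1 : IntegrableOn G1 (Set.Ioo 0 1)) (hG2 : IntegrableOn G2 (Set.Ioo 0 1)) (c C : ℝ)
    (hc : 0 ≤ c)
    (hH1 : ∀ t ∈ Set.Ioo (0:ℝ) 1, 0 ≤ H1 t) (hH2 : ∀ t ∈ Set.Ioo (0:ℝ) 1, 0 ≤ H2 t)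
    (hl : ∀ w ∈ Set.Ioo (0:ℝ) 1, ∀ t ∈ Set.Ioo (0:ℝ) 1, c * (H1 t * H2 w) ≤ F w t)
    (hu : ∀ w ∈ Set.Ioo (0:ℝ) 1, ∀ t ∈ Set.Ioo (0:ℝ) 1, F w t ≤ C * (G1 t * G2 w)) :
    c * ((∫ t in Set.Ioo (0:ℝ) 1, H1 t) * (∫ w in Set.Ioo (0:ℝ) 1, H2 w)) ≤
      ∫ w in (0:ℝ)..1, ∫ t in (0:ℝ)..1, F w t ∧
    ∫ w in (0:ℝ)..1, ∫ t in (0:ℝ)..1, F w t ≤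
      C * ((∫ t in Set.Ioo (0:ℝ) 1, G1 t) * (∫ w in Set.Ioo (0:ℝ) 1, G2 w)) := by
  simp only [intervalIntegral.integral_of_le zero_le_one, integral_Ioc_eq_integral_Ioo]
  have hF0 : ∀ w ∈ Set.Ioo (0:ℝ) 1, ∀ t ∈ Set.Ioo (0:ℝ) 1, 0 ≤ F w t := fun w hw t ht =>
    le_trans (mul_nonneg hc (mul_nonneg (hH1 t ht) (hH2 w hw))) (hl w hw t ht)
  have hFi : ∀ w ∈ Set.Ioo (0:ℝ) 1, IntegrableOn (F w) (Set.Ioo 0 1) := by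
    intro w hw
    refine Integrable.mono' ((hG1.mul_const (G2 w)).const_mul C)
      (hF.of_uncurry_left).aestronglyMeasurable ?_
    refine (ae_restrict_iff' measurableSet_Ioo).2 (ae_of_all _ fun t ht => ?_)
    rw [Real.norm_of_nonneg (hF0 w hw t ht)]
    exact hu w hw t ht
  have U : ∀ w ∈ Set.Ioo (0:ℝ) 1, ∫ t in Set.Ioo (0:ℝ) 1, F w t ≤
      C * ((∫ t in Set.Ioo (0:ℝ) 1, G1 t) * G2 w) := by
    intro w hw
    rw [← integral_mul_const, ← integral_const_mul]
    exact setIntegral_mono_on (hFi w hw) ((hG1.mul_const (G2 w)).const_mul C) measurableSet_Ioo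
      (hu w hw)
  have L : ∀ w ∈ Set.Ioo (0:ℝ) 1, c * ((∫ t in Set.Ioo (0:ℝ) 1, H1 t) * H2 w) ≤
      ∫ t in Set.Ioo (0:ℝ) 1, F w t := by
    intro w hw
    rw [← integral_mul_const, ← integral_const_mul]
    refine integral_mono_of_nonneg ?_ (hFi w hw) ?_
    · exact (ae_restrict_iff' measurableSet_Ioo).2 (ae_of_all _ fun t ht =>
        mul_nonneg hc (mul_nonneg (hH1 t ht) (hH2 w hw)))
    · exact (ae_restrict_iff' measurableSet_Ioo).2 (ae_of_all _ fun t ht => hl w hw t ht)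
  have hH1i : 0 ≤ ∫ t in Set.Ioo (0:ℝ) 1, H1 t := setIntegral_nonneg measurableSet_Ioo hH1
  have L0 : ∀ w ∈ Set.Ioo (0:ℝ) 1, 0 ≤ ∫ t in Set.Ioo (0:ℝ) 1, F w t := fun w hw =>
    setIntegral_nonneg measurableSet_Ioo (hF0 w hw)
  have hI : IntegrableOn (fun w => ∫ t in Set.Ioo (0:ℝ) 1, F w t) (Set.Ioo 0 1) := by
    refine Integrable.mono' ((hG2.const_mul (∫ t in Set.Ioo (0:ℝ) 1, G1 t)).const_mul C)
      (hF.stronglyMeasurable.integral_prod_right).aestronglyMeasurable ?_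
    refine (ae_restrict_iff' measurableSet_Ioo).2 (ae_of_all _ fun w hw => ?_)
    rw [Real.norm_of_nonneg (L0 w hw)]
    exact U w hw
  constructor
  · rw [← integral_const_mul, ← integral_const_mul]
    refine integral_mono_of_nonneg ?_ hI ?_
    · exact (ae_restrict_iff' measurableSet_Ioo).2 (ae_of_all _ fun w hw =>
        mul_nonneg hc (mul_nonneg hH1i (hH2 w hw)))
    · exact (ae_restrict_iff' measurableSet_Ioo).2 (ae_of_all _ fun w hw => L w hw)
  · rw [← integral_const_mul, ← integral_const_mul]
    exact setIntegral_mono_on hI ((hG2.const_mul (∫ t in Set.Ioo (0:ℝ) 1, G1 t)).const_mul C)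
      measurableSet_Ioo U

set_option maxHeartbeats 1000000 in
lemma upper_pt (k : ℝ) (hk : 0 < k) (C1 : ℝ) (hC1 : 0 < C1) : ∃ M : ℝ, 0 < M ∧
    ∀ a b p q t w e1 e2 X Q : ℝ, 0 < a → 0 < b → 0 ≤ p → 0 ≤ q → t ∈ Set.Ioo (0:ℝ) 1 →
      w ∈ Set.Ioo (0:ℝ) 1 → 0 < X → 0 < Q →
      e1 ≤ C1 * (Real.exp (p / 2 * (a * (1 - t) + b * w)) * (1 + p * (a * (1 - t) + b * w)) ^ (-k)) →
      e2 ≤ C1 * (Real.exp (p / 2 * (a * (1 - t) + b * w)) * (1 + p * (a * (1 - t) + b * w)) ^ (-k)) →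
      Real.exp (p / 2 * (a * (1 - t) + b * w)) * X =
        Q * Real.exp (-(a * (p + q) * t)) * Real.exp (-(b * q * w)) →
      (a * (1 - t) * (a + b * w) * e1 + a * t * (b * w) * e2) * ((a + b - a * t) * (b * (1 - w))) * X *
        (a * t * (a + b * w) * (a * (1 - t)) * (b * w) * (a + b - a * t) * (b * (1 - w))) ^ (k - 1) ≤
      (M * Q * ((a + b + a * b * q) / (1 + b * q + p * (a + b + a * b * q))) ^ k *
        (a ^ k * a ^ (k - 1) * b ^ k * b ^ (k - 1) * (a + b) ^ k)) *
        (gk k k (1/2) (a * (p + q)) t * gk k (k + 1) (1/2) (b * q) w) := by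
  obtain ⟨M, hM, hM'⟩ := two_add_rpow k (1/2) hk (by norm_num)
  refine ⟨C1 * M * M, by positivity, ?_⟩
  intro a b p q t w e1 e2 X Q ha hb hp hq ht hw hX hQ he1 he2 hE
  obtain ⟨ht0, ht1⟩ := ht
  obtain ⟨hw0, hw1⟩ := hw
  have ht1' : 0 < 1 - t := by linarith
  have hw1' : 0 < 1 - w := by linarith
  set φ : ℝ := (a + b + a * b * q) / (1 + b * q + p * (a + b + a * b * q)) with hφ
  have hφ0 : 0 < φ := by positivity
  set Eb : ℝ := Real.exp (p / 2 * (a * (1 - t) + b * w)) * (1 + p * (a * (1 - t) + b * w)) ^ (-k) with hEb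
  have hEb0 : 0 < Eb := by positivity
  have hR : 0 < a + b - a * t := by nlinarith
  have powid : ∀ x : ℝ, 0 < x → x ^ k = x * x ^ (k - 1) := by
    intro x hx
    rw [Real.rpow_sub_one hx.ne']; field_simp
  have s1 : a * (1 - t) * (a + b * w) * e1 + a * t * (b * w) * e2 ≤ C1 * (a * (a + b * w) * Eb) := by
    calc _ ≤ a * (1 - t) * (a + b * w) * (C1 * Eb) + a * t * (b * w) * (C1 * Eb) := by gcongr
      _ = C1 * (a * (a + b * w - a * t) * Eb) := by ring
      _ ≤ _ := by
        gcongr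
        have : 0 < a * t := by positivity
        linarith
  have s2 : (a * t * (a + b * w) * (a * (1 - t)) * (b * w) * (a + b - a * t) * (b * (1 - w))) ^ (k - 1)
      = a ^ (k-1) * t ^ (k-1) * (a + b * w) ^ (k-1) * (a ^ (k-1) * (1 - t) ^ (k-1)) * (b ^ (k-1) * w ^ (k-1)) * (a + b - a * t) ^ (k-1) * (b * (1 - w)) ^ (k - 1) := by
    rw [Real.mul_rpow (by positivity) (by positivity), Real.mul_rpow (by positivity) (by positivity),
      Real.mul_rpow (by positivity) (by positivity), Real.mul_rpow (by positivity) (by positivity),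
      Real.mul_rpow (by positivity) (by positivity), Real.mul_rpow ha.le ht0.le,
      Real.mul_rpow ha.le ht1'.le, Real.mul_rpow hb.le hw0.le]
  have s3 : (a + b * w) ^ k * (1 + p * (a * (1 - t) + b * w)) ^ (-k) ≤
      (M * Real.exp (1/2 * (a * (p + q) * t))) * (M * Real.exp (1/2 * (b * q * w))) * φ ^ k := by
    have hd : 0 < 1 + p * (a * (1 - t) + b * w) := by positivity
    rw [Real.rpow_neg hd.le, ← div_eq_mul_inv, ← Real.div_rpow (by positivity) hd.le]
    have h1 : (a + b * w) / (1 + p * (a * (1 - t) + b * w)) ≤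
        (1 + a * (p + q) * t) * ((a + b * w) / (1 + p * (a + b * w))) := by
      rw [mul_div_assoc', div_le_div_iff₀ hd (by positivity)]
      have : 1 + p * (a + b * w) ≤ (1 + a * (p + q) * t) * (1 + p * (a * (1 - t) + b * w)) := by
        have : 0 ≤ a * (p + q) * t * (p * (a * (1 - t) + b * w)) := by positivity
        have : 0 ≤ a * q * t := by positivity
        nlinarith
      calc _ ≤ (a + b * w) * ((1 + a * (p + q) * t) * (1 + p * (a * (1 - t) + b * w))) := by gcongr
        _ = _ := by ring
    have h2 : (a + b * w) / (1 + p * (a + b * w)) ≤ (2 + b * q * w) * φ := by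
      rw [hφ, mul_div_assoc', div_le_div_iff₀ (by positivity) (by positivity)]
      have k1 : (a + b * w) * (1 + b * q) ≤ (2 + b * q * w) * (a + b + a * b * q) := by
        have : 0 ≤ b * (1 - w) := by positivity
        have : 0 ≤ a * b * q := by positivity
        have : 0 ≤ b * q * w * (a + a * b * q) := by positivity
        nlinarith
      have k2 : 0 ≤ (1 + b * q * w) * (a + b + a * b * q) * (p * (a + b * w)) := by positivity
      nlinarith
    calc _ ≤ ((1 + a * (p + q) * t) * ((2 + b * q * w) * φ)) ^ k := by
          apply Real.rpow_le_rpow (by positivity) _ hk.le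
          exact h1.trans (by gcongr)
      _ = (1 + a * (p + q) * t) ^ k * (2 + b * q * w) ^ k * φ ^ k := by
          rw [Real.mul_rpow (by positivity) (by positivity), Real.mul_rpow (by positivity) (by positivity)]
          ring
      _ ≤ _ := by
          have m1 := hM' (a * (p + q) * t) (by positivity)
          have m2 := hM' (b * q * w) (by positivity)
          have m3 : (1 + a * (p + q) * t) ^ k ≤ (2 + a * (p + q) * t) ^ k := by
            apply Real.rpow_le_rpow (by positivity) (by linarith) hk.le
          have m4 := m3.trans m1
          gcongr
  have s4 : (a + b - a * t) ^ k ≤ (a + b) ^ k := by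
    apply Real.rpow_le_rpow hR.le _ hk.le
    have : 0 < a * t := by positivity
    linarith
  have x1 : Real.exp (1/2 * (a * (p + q) * t)) * Real.exp (-(a * (p + q) * t)) =
      Real.exp (-(1/2 * (a * (p+q)) * t)) := by
    rw [← Real.exp_add]; congr 1; ring
  have x2 : Real.exp (1/2 * (b * q * w)) * Real.exp (-(b * q * w)) =
      Real.exp (-(1/2 * (b * q) * w)) := by
    rw [← Real.exp_add]; congr 1; ring
  rw [s2]
  calc _ ≤ C1 * (a * (a + b * w) * Eb) * ((a + b - a * t) * (b * (1 - w))) * X *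
        (a ^ (k-1) * t ^ (k-1) * (a + b * w) ^ (k-1) * (a ^ (k-1) * (1 - t) ^ (k-1)) * (b ^ (k-1) * w ^ (k-1)) * (a + b - a * t) ^ (k-1) * (b * (1 - w)) ^ (k - 1)) := by
        gcongr
    _ = C1 * (a ^ k * a ^ (k-1) * b ^ (k-1)) * ((a + b * w) ^ k * (1 + p * (a * (1 - t) + b * w)) ^ (-k)) *
        (a + b - a * t) ^ k * (b * (1 - w)) ^ k * (Real.exp (p / 2 * (a * (1 - t) + b * w)) * X) *
        (t ^ (k-1) * (1 - t) ^ (k-1) * w ^ (k-1)) := by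
        rw [powid a ha, powid (a + b * w) (by positivity), powid _ hR, powid (b * (1 - w)) (by positivity), hEb]
        ring
    _ ≤ C1 * (a ^ k * a ^ (k-1) * b ^ (k-1)) * ((M * Real.exp (1/2 * (a * (p + q) * t))) * (M * Real.exp (1/2 * (b * q * w))) * φ ^ k) *
        (a + b) ^ k * (b * (1 - w)) ^ k * (Real.exp (p / 2 * (a * (1 - t) + b * w)) * X) *
        (t ^ (k-1) * (1 - t) ^ (k-1) * w ^ (k-1)) := by
        gcongr
    _ = _ := by
        rw [hE, Real.mul_rpow hb.le hw1'.le]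
        unfold gk
        rw [← x1, ← x2, add_sub_cancel_right]
        ring

set_option maxHeartbeats 1000000 in
lemma lower_pt (k : ℝ) (hk : 0 < k) (C1 : ℝ) (hC1 : 0 < C1) : ∃ M : ℝ, 0 < M ∧
    ∀ a b p q t w e1 e2 X Q : ℝ, 0 < a → 0 < b → 0 ≤ p → 0 ≤ q → t ∈ Set.Ioo (0:ℝ) 1 →
      w ∈ Set.Ioo (0:ℝ) 1 → 0 < X → 0 < Q →
      C1 * (Real.exp (p / 2 * (a * (1 - t) + b * w)) * (1 + p * (a * (1 - t) + b * w)) ^ (-k)) ≤ e1 →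
      0 ≤ e2 →
      Real.exp (p / 2 * (a * (1 - t) + b * w)) * X =
        Q * Real.exp (-(a * (p + q) * t)) * Real.exp (-(b * q * w)) →
      (M * Q * ((a + b + a * b * q) / (1 + b * q + p * (a + b + a * b * q))) ^ k * (1 + b * q) ^ k *
        (a ^ k * a ^ (k - 1) * b ^ k * b ^ (k - 1) * (a + b) ^ k)) *
        (gk k (2 * k + 1) 1 (a * (p + q)) t * gk (2 * k) (k + 1) (1 + k) (b * q) w) ≤
      (a * (1 - t) * (a + b * w) * e1 + a * t * (b * w) * e2) * ((a + b - a * t) * (b * (1 - w))) * X *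
        (a * t * (a + b * w) * (a * (1 - t)) * (b * w) * (a + b - a * t) * (b * (1 - w))) ^ (k - 1) := by
  refine ⟨C1 * Real.exp (-1) ^ k, by positivity, ?_⟩
  intro a b p q t w e1 e2 X Q ha hb hp hq ht hw hX hQ he1 he2 hE
  obtain ⟨ht0, ht1⟩ := ht
  obtain ⟨hw0, hw1⟩ := hw
  have ht1' : 0 < 1 - t := by linarith
  have hw1' : 0 < 1 - w := by linarith
  set φ : ℝ := (a + b + a * b * q) / (1 + b * q + p * (a + b + a * b * q)) with hφ
  have hφ0 : 0 < φ := by positivity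
  set Eb : ℝ := Real.exp (p / 2 * (a * (1 - t) + b * w)) * (1 + p * (a * (1 - t) + b * w)) ^ (-k) with hEb
  have hEb0 : 0 < Eb := by positivity
  have hR : 0 < a + b - a * t := by nlinarith
  have powid : ∀ x : ℝ, 0 < x → x ^ k = x * x ^ (k - 1) := by
    intro x hx
    rw [Real.rpow_sub_one hx.ne']; field_simp
  have s1 : a * (1 - t) * (a + b * w) * (C1 * Eb) ≤
      a * (1 - t) * (a + b * w) * e1 + a * t * (b * w) * e2 := by
    calc _ ≤ a * (1 - t) * (a + b * w) * e1 := by gcongr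
      _ ≤ _ := by
        have : 0 ≤ a * t * (b * w) * e2 := by positivity
        linarith
  have s2 : (a * t * (a + b * w) * (a * (1 - t)) * (b * w) * (a + b - a * t) * (b * (1 - w))) ^ (k - 1)
      = a ^ (k-1) * t ^ (k-1) * (a + b * w) ^ (k-1) * (a * (1 - t)) ^ (k-1) * (b ^ (k-1) * w ^ (k-1)) * (a + b - a * t) ^ (k-1) * (b * (1 - w)) ^ (k - 1) := by
    rw [Real.mul_rpow (by positivity) (by positivity), Real.mul_rpow (by positivity) (by positivity),
      Real.mul_rpow (by positivity) (by positivity), Real.mul_rpow (by positivity) (by positivity),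
      Real.mul_rpow (by positivity) (by positivity), Real.mul_rpow ha.le ht0.le,
      Real.mul_rpow hb.le hw0.le]
  have s3 : Real.exp (-1) ^ k * φ ^ k * w ^ k * (1 + b * q) ^ k * Real.exp (-(k * (b * q * w)))
      ≤ (a + b * w) ^ k * (1 + p * (a * (1 - t) + b * w)) ^ (-k) := by
    have hd : 0 < 1 + p * (a * (1 - t) + b * w) := by positivity
    rw [Real.rpow_neg hd.le, ← div_eq_mul_inv, ← Real.div_rpow (by positivity) hd.le]
    have h1 : (a + b * w) / (1 + p * (a + b * w)) ≤ (a + b * w) / (1 + p * (a * (1 - t) + b * w)) := by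
      gcongr
      nlinarith
    -- τ = w (1 + b q), τ e^{-τ} ≤ min 1 τ
    have h2 : φ * (w * (1 + b * q) * Real.exp (-(w * (1 + b * q)))) ≤ (a + b * w) / (1 + p * (a + b * w)) := by
      set τ := w * (1 + b * q) with hτ
      have hτ0 : 0 < τ := by positivity
      rw [hφ, div_mul_eq_mul_div, div_le_div_iff₀ (by positivity) (by positivity)]
      set z := τ * Real.exp (-τ) with hz
      have hz0 : 0 ≤ z := by positivity
      have z1 : z ≤ 1 := by
        rw [hz, Real.exp_neg, ← div_eq_mul_inv, div_le_one (by positivity)]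
        linarith [Real.add_one_le_exp τ]
      have z2 : z ≤ w * (1 + b * q) := by
        rw [← hτ, hz]
        have : Real.exp (-τ) ≤ 1 := Real.exp_le_one_iff.2 (by linarith)
        nlinarith
      have k1 : (a + b + a * b * q) * z ≤ (a + b * w) * (1 + b * q) := by
        have g1 : a * (1 + b * q) * z ≤ a * (1 + b * q) := by
          have : 0 < a * (1 + b * q) := by positivity
          nlinarith
        have g2 : b * z ≤ b * (w * (1 + b * q)) := by gcongr
        nlinarith
      have k2 : (a + b + a * b * q) * z * (p * (a + b * w)) ≤ (a + b + a * b * q) * 1 * (p * (a + b * w)) := by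
        gcongr
      linear_combination k1 + k2
    calc _ = (φ * (w * (1 + b * q) * (Real.exp (-1) * Real.exp (-(b * q * w))))) ^ k := by
          rw [Real.mul_rpow (by positivity) (by positivity), Real.mul_rpow (by positivity) (by positivity),
            Real.mul_rpow (by positivity) (by positivity), Real.mul_rpow (by positivity) (by positivity),
            ← Real.exp_mul (-(b * q * w)),
            show -(b * q * w) * k = -(k * (b * q * w)) by ring]
          ring
      _ ≤ _ := by
          apply Real.rpow_le_rpow (by positivity) _ hk.le
          refine le_trans ?_ (h2.trans h1)
          gcongr
          rw [← Real.exp_add]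
          apply Real.exp_le_exp.2
          linarith
  have s4 : (a + b) ^ k * (1 - t) ^ k ≤ (a + b - a * t) ^ k := by
    rw [← Real.mul_rpow (by positivity) (by positivity)]
    apply Real.rpow_le_rpow (by positivity) _ hk.le
    nlinarith
  have x2 : Real.exp (-(k * (b * q * w))) * Real.exp (-(b * q * w)) =
      Real.exp (-((1 + k) * (b * q) * w)) := by
    rw [← Real.exp_add]; congr 1; ring
  have x3 : (1 - t) ^ (2 * k) = (1 - t) ^ k * (1 - t) ^ k := by
    rw [← Real.rpow_add ht1']; congr 1; ring
  have x4 : w ^ (2 * k - 1) = w ^ k * w ^ (k - 1) := by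
    rw [← Real.rpow_add hw0]; congr 1; ring
  rw [s2]
  calc _ = C1 * (a ^ (k-1) * b ^ (k-1)) * (Real.exp (-1) ^ k * φ ^ k * w ^ k * (1 + b * q) ^ k * Real.exp (-(k * (b * q * w)))) *
        ((a + b) ^ k * (1 - t) ^ k) * (b * (1 - w)) ^ k * (a * (1 - t)) ^ k * (Real.exp (p / 2 * (a * (1 - t) + b * w)) * X) *
        (t ^ (k-1) * w ^ (k-1)) := by
        rw [hE, Real.mul_rpow hb.le hw1'.le, Real.mul_rpow ha.le ht1'.le]
        unfold gk
        rw [← x2, add_sub_cancel_right, add_sub_cancel_right, x3, x4, show -(1 * (a * (p + q)) * t) = -(a * (p + q) * t) by ring]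
        ring
    _ ≤ C1 * (a ^ (k-1) * b ^ (k-1)) * ((a + b * w) ^ k * (1 + p * (a * (1 - t) + b * w)) ^ (-k)) *
        (a + b - a * t) ^ k * (b * (1 - w)) ^ k * (a * (1 - t)) ^ k * (Real.exp (p / 2 * (a * (1 - t) + b * w)) * X) *
        (t ^ (k-1) * w ^ (k-1)) := by
        gcongr
    _ = (a * (1 - t) * (a + b * w) * (C1 * Eb)) * ((a + b - a * t) * (b * (1 - w))) * X *
        (a ^ (k-1) * t ^ (k-1) * (a + b * w) ^ (k-1) * (a * (1 - t)) ^ (k-1) * (b ^ (k-1) * w ^ (k-1)) * (a + b - a * t) ^ (k-1) * (b * (1 - w)) ^ (k - 1)) := by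
        rw [powid (a * (1 - t)) (by positivity), powid (a + b * w) (by positivity), powid _ hR, powid (b * (1 - w)) (by positivity), hEb]
        ring
    _ ≤ _ := by
        gcongr

lemma comp1 (a b p q : ℝ) (ha : 0 < a) (hb : 0 < b) (hp : 0 ≤ p) (hq : 0 ≤ q) :
    (a + b + a * b * q) * ((1 + a * p) * (1 + (a + b) * (p + q))) ≤
      4 * ((a + b) * (1 + a * (p + q)) * (1 + b * q + p * (a + b + a * b * q))) ∧
    (a + b) * (1 + a * (p + q)) * (1 + b * q + p * (a + b + a * b * q)) ≤
      4 * ((a + b + a * b * q) * ((1 + a * p) * (1 + (a + b) * (p + q)))) := by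
  constructor
  · rw [← sub_nonneg]; ring_nf; positivity
  · rw [← sub_nonneg]; ring_nf; positivity

lemma comp2 (k a b p q : ℝ) (hk : 0 < k) (ha : 0 < a) (hb : 0 < b) (hp : 0 ≤ p) (hq : 0 ≤ q) :
    ((a + b + a * b * q) / (1 + b * q + p * (a + b + a * b * q))) ^ k * (a + b) ^ (-k) *
      (1 + a * (p + q)) ^ (-k) * (1 + b * q) ^ (-k) ≤
      4 ^ k * (1 / ((1 + a * p) ^ k * (1 + b * q) ^ k * (1 + (a + b) * (p + q)) ^ k)) ∧
    1 / ((1 + a * p) ^ k * (1 + b * q) ^ k * (1 + (a + b) * (p + q)) ^ k) ≤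
    4 ^ k * (((a + b + a * b * q) / (1 + b * q + p * (a + b + a * b * q))) ^ k * (a + b) ^ (-k) *
      (1 + a * (p + q)) ^ (-k) * (1 + b * q) ^ (-k)) := by
  obtain ⟨h1, h2⟩ := comp1 a b p q ha hb hp hq
  set N := a + b + a * b * q with hN
  set D := 1 + b * q + p * N with hD
  have hN0 : 0 < N := by positivity
  have hD0 : 0 < D := by positivity
  have e1 : (N / D) ^ k * (a + b) ^ (-k) * (1 + a * (p + q)) ^ (-k) * (1 + b * q) ^ (-k) =
      (N / D * (a + b)⁻¹ * (1 + a * (p + q))⁻¹ * (1 + b * q)⁻¹) ^ k := by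
    rw [Real.mul_rpow (by positivity) (by positivity), Real.mul_rpow (by positivity) (by positivity),
      Real.mul_rpow (by positivity) (by positivity), Real.rpow_neg (by positivity),
      Real.rpow_neg (by positivity), Real.rpow_neg (by positivity), Real.inv_rpow (by positivity),
      Real.inv_rpow (by positivity), Real.inv_rpow (by positivity)]
  have e2 : 1 / ((1 + a * p) ^ k * (1 + b * q) ^ k * (1 + (a + b) * (p + q)) ^ k) =
      (1 / ((1 + a * p) * (1 + b * q) * (1 + (a + b) * (p + q)))) ^ k := by
    rw [Real.div_rpow (by positivity) (by positivity), Real.one_rpow,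
      Real.mul_rpow (by positivity) (by positivity), Real.mul_rpow (by positivity) (by positivity)]
  have e3 : N / D * (a + b)⁻¹ * (1 + a * (p + q))⁻¹ * (1 + b * q)⁻¹ =
      N / ((a + b) * (1 + a * (p + q)) * D * (1 + b * q)) := by
    field_simp
  have hq' : 0 < 1 + b * q := by positivity
  rw [e1, e2, e3, ← Real.mul_rpow (by positivity) (by positivity),
    ← Real.mul_rpow (by positivity) (by positivity)]
  constructor
  · apply Real.rpow_le_rpow (by positivity) _ hk.le
    rw [mul_one_div, div_le_div_iff₀ (by positivity) (by positivity)]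
    linear_combination (1 + b * q) * h1
  · apply Real.rpow_le_rpow (by positivity) _ hk.le
    rw [mul_div_assoc', div_le_div_iff₀ (by positivity) (by positivity)]
    linear_combination (1 + b * q) * h2

lemma Zid (k a b : ℝ) (ha : 0 < a) (hb : 0 < b) :
    1 / Vlam (a + b) b 0 ^ (2 * k) * (b * (a * (a ^ k * a ^ (k - 1) * b ^ k * b ^ (k - 1) * (a + b) ^ k)))
      = (a + b) ^ (-k) := by
  have powid : ∀ x : ℝ, 0 < x → x * (x ^ k * x ^ (k - 1)) = x ^ (2 * k) := by
    intro x hx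
    rw [Real.rpow_sub_one hx.ne', show 2 * k = k + k by ring, Real.rpow_add hx]; field_simp
  have hc : 0 < a + b := by positivity
  have e : Vlam (a + b) b 0 = a * (a + b) * b := by unfold Vlam; ring
  rw [e, Real.mul_rpow (by positivity) hb.le, Real.mul_rpow ha.le hc.le, Real.rpow_neg hc.le,
    ← powid a ha, ← powid b hb, ← powid _ hc, Real.rpow_sub_one hc.ne']
  have := Real.rpow_pos_of_pos ha k
  have := Real.rpow_pos_of_pos hb k
  have := Real.rpow_pos_of_pos hc k
  have := Real.rpow_pos_of_pos ha (k-1)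
  have := Real.rpow_pos_of_pos hb (k-1)
  field_simp

set_option maxHeartbeats 1000000 in
lemma core (k : ℝ) (hk : 0 < k) : ∃ C : ℝ, 0 < C ∧ ∀ a b p q l x : ℝ, 0 < a → 0 < b → 0 ≤ p → 0 ≤ q →
    (l + b + a) + (l + b) + l = 0 →
    C⁻¹ * (Real.exp ((l + b + a) * (x + q + p) + (l + b) * (x + q) + l * x) *
      (1 / ((1 + a * p) ^ k * (1 + b * q) ^ k * (1 + (a + b) * (p + q)) ^ k))) ≤
      EkA2 k (x + q + p) (x + q) x (l + b + a) (l + b) l ∧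
    EkA2 k (x + q + p) (x + q) x (l + b + a) (l + b) l ≤
    C * (Real.exp ((l + b + a) * (x + q + p) + (l + b) * (x + q) + l * x) *
      (1 / ((1 + a * p) ^ k * (1 + b * q) ^ k * (1 + (a + b) * (p + q)) ^ k))) := by
  obtain ⟨C1, hC1, hE⟩ := Erk1_bounds k hk
  obtain ⟨Mu, hMu, hu⟩ := upper_pt k hk C1 hC1
  obtain ⟨Ml, hMl, hl⟩ := lower_pt k hk C1⁻¹ (by positivity)
  obtain ⟨A1, hA1, g1⟩ := gk_bounds k k (1/2) hk hk (by norm_num)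
  obtain ⟨A2, hA2, g2⟩ := gk_bounds k (k+1) (1/2) hk (by linarith) (by norm_num)
  obtain ⟨A3, hA3, g3⟩ := gk_bounds k (2*k+1) 1 hk (by linarith) (by norm_num)
  obtain ⟨A4, hA4, g4⟩ := gk_bounds (2*k) (k+1) (1+k) (by linarith) (by linarith) (by linarith)
  set G0 : ℝ := 3 * Real.Gamma (3 * k) / Real.Gamma k ^ 2 with hG0
  have hG0p : 0 < G0 := by
    have := Real.Gamma_pos_of_pos hk
    have := Real.Gamma_pos_of_pos (show 0 < 3 * k by linarith)
    positivity
  set U : ℝ := G0 * Mu * A1 * A2 * 4 ^ k with hU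
  set L : ℝ := G0 * Ml * A3⁻¹ * A4⁻¹ * (4 ^ k)⁻¹ with hL
  have hUp : 0 < U := by positivity
  have hLp : 0 < L := by positivity
  refine ⟨U + L⁻¹, by positivity, ?_⟩
  intro a b p q l x ha hb hp hq hsum
  set Q : ℝ := Real.exp ((l + b + a) * (x + q + p) + (l + b) * (x + q) + l * x) with hQ
  have hQp : 0 < Q := Real.exp_pos _
  set φ : ℝ := (a + b + a * b * q) / (1 + b * q + p * (a + b + a * b * q)) with hφ
  have hφp : 0 < φ := by positivity
  set Z : ℝ := a ^ k * a ^ (k - 1) * b ^ k * b ^ (k - 1) * (a + b) ^ k with hZ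
  have hZp : 0 < Z := by positivity
  set F : ℝ → ℝ → ℝ := fun w t =>
      (a * (1 - t) * (a + b * w) * Erk1 k (p / 2) (a * (1 - t) + b * w) + a * t * (b * w) * Erk1 k (-(p / 2)) (a * (1 - t) + b * w)) * ((a + b - a * t) * (b * (1 - w))) * 
      Real.exp ((p + 2 * q) * (l + b + a - a * t + (l + b - b * w)) / 2) *
        (a * t * (a + b * w) * (a * (1 - t)) * (b * w) * (a + b - a * t) * (b * (1 - w))) ^ (k - 1) with hF
  have hFm : Measurable (Function.uncurry F) := by
    have m1 := Erk1_meas k (p / 2)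
    have m2 := Erk1_meas k (-(p / 2))
    rw [hF]
    unfold Function.uncurry
    fun_prop
  have hI : EkA2 k (x + q + p) (x + q) x (l + b + a) (l + b) l =
      G0 * (1 / Vlam (a + b) b 0 ^ (2 * k)) * (b * (a * ∫ w in (0:ℝ)..1, ∫ t in (0:ℝ)..1, F w t)) := by
    unfold EkA2
    have v : Vlam (l + b + a) (l + b) l = Vlam (a + b) b 0 := by unfold Vlam; ring
    have o := fun f : ℝ → ℝ => intervalIntegral.mul_integral_comp_sub_mul (a := 0) (b := 1) (f := f) b (l + b)
    have i := fun f : ℝ → ℝ => intervalIntegral.mul_integral_comp_sub_mul (a := 0) (b := 1) (f := f) a (l + b + a)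
    simp only [mul_one, mul_zero, sub_zero, add_sub_cancel_right] at o i
    rw [v, ← o]
    simp only [← i]
    rw [intervalIntegral.integral_const_mul]
    have e : ∀ w t : ℝ, ((l + b + a - a * t - (l + b)) * (l + b + a - (l + b - b * w)) * Erk1 k ((x + q + p - (x + q)) / 2) (l + b + a - a * t - (l + b - b * w))
        + (l + b + a - (l + b + a - a * t)) * (l + b - (l + b - b * w)) * Erk1 k (-(x + q + p - (x + q)) / 2) (l + b + a - a * t - (l + b - b * w)))
      * ((l + b + a - a * t - l) * (l + b - b * w - l)) * Real.exp ((x + q + p + (x + q) - 2 * x) * (l + b + a - a * t + (l + b - b * w)) / 2)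
      * Wk k (l + b + a) (l + b) l (l + b + a - a * t) (l + b - b * w) = F w t := by
      intro w t
      rw [hF]
      unfold Wk
      congr 1
      · rw [show (x + q + p - (x + q)) / 2 = p / 2 by ring, show -(x + q + p - (x + q)) / 2 = -(p / 2) by ring,
          show l + b + a - a * t - (l + b - b * w) = a * (1 - t) + b * w by ring,
          show x + q + p + (x + q) - 2 * x = p + 2 * q by ring]
        ring
      · congr 1; ring
    simp only [e]
    rw [hG0]
    field_simp
  have hexp : ∀ w t : ℝ, Real.exp (p / 2 * (a * (1 - t) + b * w)) * Real.exp ((p + 2 * q) * (l + b + a - a * t + (l + b - b * w)) / 2) =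
        Q * Real.exp (-(a * (p + q) * t)) * Real.exp (-(b * q * w)) := by
    intro w t
    rw [hQ, ← Real.exp_add, ← Real.exp_add, ← Real.exp_add]
    congr 1
    linear_combination (-x) * hsum
  have hap : 0 ≤ a * (p + q) := by positivity
  have hbq : 0 ≤ b * q := by positivity
  obtain ⟨i1, -, b1⟩ := g1 _ hap
  obtain ⟨i2, -, b2⟩ := g2 _ hbq
  obtain ⟨-, b3, -⟩ := g3 _ hap
  obtain ⟨-, b4, -⟩ := g4 _ hbq
  have hEE : ∀ w ∈ Set.Ioo (0:ℝ) 1, ∀ t ∈ Set.Ioo (0:ℝ) 1, _ := fun w hw t ht =>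
    hE (p / 2) (a * (1 - t) + b * w) (by positivity)
      (by have := ht.2; have := hw.1; have : 0 < 1 - t := by linarith
          positivity)
  have h2p : ∀ w t : ℝ, 2 * (p / 2 * (a * (1 - t) + b * w)) = p * (a * (1 - t) + b * w) := by
    intro w t; ring
  simp only [h2p] at hEE
  obtain ⟨lo, up⟩ := prod_bounds F hFm (gk k k (1/2) (a * (p + q))) (gk k (k + 1) (1/2) (b * q))
    (gk k (2 * k + 1) 1 (a * (p + q))) (gk (2 * k) (k + 1) (1 + k) (b * q)) i1 i2
    (Ml * Q * φ ^ k * (1 + b * q) ^ k * Z) (Mu * Q * φ ^ k * Z) (by positivity)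
    (fun t ht => gk_nonneg _ _ _ _ _ ht) (fun t ht => gk_nonneg _ _ _ _ _ ht)
    (fun w hw t ht => hl a b p q t w _ _ _ Q ha hb hp hq ht hw (Real.exp_pos _) hQp
      (hEE w hw t ht).1 (hEE w hw t ht).2.2.1 (hexp w t))
    (fun w hw t ht => hu a b p q t w _ _ _ Q ha hb hp hq ht hw (Real.exp_pos _) hQp
      (hEE w hw t ht).2.1 (hEE w hw t ht).2.2.2 (hexp w t))
  obtain ⟨c1, c2⟩ := comp2 k a b p q hk ha hb hp hq
  rw [← hφ] at c1 c2
  have hz := Zid k a b ha hb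
  rw [← hZ] at hz
  have hVp : 0 < Vlam (a + b) b 0 := by
    have : Vlam (a + b) b 0 = a * (a + b) * b := by unfold Vlam; ring
    rw [this]; positivity
  set Y : ℝ := 1 / ((1 + a * p) ^ k * (1 + b * q) ^ k * (1 + (a + b) * (p + q)) ^ k) with hY
  have hYp : 0 < Y := by positivity
  rw [hI]
  constructor
  · have pw : (1 + b * q) ^ k * (1 + b * q) ^ (-(2 * k)) = (1 + b * q) ^ (-k) := by
      rw [← Real.rpow_add (by positivity)]; congr 1; ring
    calc (U + L⁻¹)⁻¹ * (Q * Y) ≤ L * (Q * Y) := by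
          gcongr
          rw [inv_le_comm₀ (by positivity) hLp]
          linarith
      _ ≤ L * (Q * (4 ^ k * (φ ^ k * (a + b) ^ (-k) * (1 + a * (p + q)) ^ (-k) * (1 + b * q) ^ (-k)))) := by
          gcongr
      _ = G0 * Ml * A3⁻¹ * A4⁻¹ * (Q * (φ ^ k * (a + b) ^ (-k) * (1 + a * (p + q)) ^ (-k) * (1 + b * q) ^ (-k))) := by
          rw [hL]
          have : (0:ℝ) < 4 ^ k := by positivity
          field_simp
      _ = G0 * (1 / Vlam (a + b) b 0 ^ (2 * k)) * (b * (a * (Ml * Q * φ ^ k * (1 + b * q) ^ k * Z * ((A3⁻¹ * (1 + a * (p + q)) ^ (-k)) * (A4⁻¹ * (1 + b * q) ^ (-(2 * k))))))) := by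
          rw [← hz, ← pw]; ring
      _ ≤ _ := by
          have : (A3⁻¹ * (1 + a * (p + q)) ^ (-k)) * (A4⁻¹ * (1 + b * q) ^ (-(2 * k))) ≤
            (∫ t in Set.Ioo (0:ℝ) 1, gk k (2 * k + 1) 1 (a * (p + q)) t) *
            ∫ t in Set.Ioo (0:ℝ) 1, gk (2 * k) (k + 1) (1 + k) (b * q) t := by
            apply mul_le_mul b3 b4 (by positivity)
            exact le_trans (by positivity) b3
          have h5 := le_trans (mul_le_mul_of_nonneg_left this
            (show 0 ≤ Ml * Q * φ ^ k * (1 + b * q) ^ k * Z by positivity)) lo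
          gcongr
  · calc _ ≤ G0 * (1 / Vlam (a + b) b 0 ^ (2 * k)) * (b * (a * (Mu * Q * φ ^ k * Z * ((A1 * (1 + a * (p + q)) ^ (-k)) * (A2 * (1 + b * q) ^ (-k)))))) := by
          have : (∫ t in Set.Ioo (0:ℝ) 1, gk k k (1/2) (a * (p + q)) t) *
            (∫ t in Set.Ioo (0:ℝ) 1, gk k (k + 1) (1/2) (b * q) t) ≤ (A1 * (1 + a * (p + q)) ^ (-k)) * (A2 * (1 + b * q) ^ (-k)) := by
            apply mul_le_mul b1 b2 _ (by positivity)
            exact setIntegral_nonneg measurableSet_Ioo (fun t ht => gk_nonneg _ _ _ _ _ ht)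
          have h5 := up.trans (mul_le_mul_of_nonneg_left this
            (show 0 ≤ Mu * Q * φ ^ k * Z by positivity))
          gcongr
      _ = G0 * Mu * A1 * A2 * (Q * (φ ^ k * (a + b) ^ (-k) * (1 + a * (p + q)) ^ (-k) * (1 + b * q) ^ (-k))) := by
          rw [← hz]; ring
      _ ≤ G0 * Mu * A1 * A2 * (Q * (4 ^ k * Y)) := by gcongr
      _ = U * (Q * Y) := by rw [hU]; ring
      _ ≤ _ := by
          gcongr
          have : 0 < L⁻¹ := by positivity
          linarith

/-- Theorem 4.1: sharp estimate of the `A₂` Dunkl kernel. -/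
theorem estimate_Cplus (k : ℝ) (hk : 0 < k) :
    ∃ C : ℝ, 0 < C ∧ ∀ l1 l2 l3 x1 x2 x3 : ℝ,
      l1 + l2 + l3 = 0 →
      l2 < l1 →
      l3 < l2 →
      x1 + x2 + x3 = 0 →
      x2 ≤ x1 →
      x3 ≤ x2 →
      (C⁻¹ * (Real.exp (l1 * x1 + l2 * x2 + l3 * x3) /
          ((1 + (l1 - l2) * (x1 - x2)) ^ k * (1 + (l2 - l3) * (x2 - x3)) ^ k
            * (1 + (l1 - l3) * (x1 - x3)) ^ k))
        ≤ EkA2 k x1 x2 x3 l1 l2 l3 ∧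
      EkA2 k x1 x2 x3 l1 l2 l3
        ≤ C * (Real.exp (l1 * x1 + l2 * x2 + l3 * x3) /
          ((1 + (l1 - l2) * (x1 - x2)) ^ k * (1 + (l2 - l3) * (x2 - x3)) ^ k
            * (1 + (l1 - l3) * (x1 - x3)) ^ k))) := by
  obtain ⟨C, hC, h⟩ := core k hk
  refine ⟨C, hC, ?_⟩
  intro l1 l2 l3 x1 x2 x3 hl h12 h23 _ hx12 hx23
  have key := h (l1 - l2) (l2 - l3) (x1 - x2) (x2 - x3) l3 x3 (by linarith) (by linarith)
    (by linarith) (by linarith) (by linarith)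
  rw [show l3 + (l2 - l3) + (l1 - l2) = l1 by ring, show l3 + (l2 - l3) = l2 by ring,
    show x3 + (x2 - x3) + (x1 - x2) = x1 by ring, show x3 + (x2 - x3) = x2 by ring,
    show l1 - l2 + (l2 - l3) = l1 - l3 by ring, show x1 - x2 + (x2 - x3) = x1 - x3 by ring,
    mul_one_div] at key
  exact key
end
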